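/- arXiv:1302.4219 — 2 statements merged into one kernel-verified Lean document; each statement's English description precedes it below -/
import Mathlib

section
/- For every non-star tree T and every vertex x of T that is not a bad vertex (not the center of an induced P5 configuration, i.e., not the middle vertex of a path P5 when T ≅ P5), there exists a (T,x)-good 2-placement: a fixed-point-free permutation σ of V(T) such that σ is a 2-placement of T, dist(σ(u),σ(v)) ≤ 5 for every edge uv of T, dist(x,σ(x)) = 1, dist(y,σ(y)) ≤ 2 for every neighbor y of x, and dist(y,σ(y)) ≤ 4 for every leaf y. -/
open SimpleGraph

/-- A non-star tree: a tree in which no vertex is adjacent to all other vertices. -/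
def IsNonStarTree {V : Type*} (G : SimpleGraph V) : Prop :=
  G.IsTree ∧ ¬ ∃ v, ∀ w, w ≠ v → G.Adj v w

/-- Rooted labelled trees: `join a b` hangs the tree `b` below the root of `a`. -/
inductive RT (V : Type*) where
  | leaf (v : V) : RT V
  | join (a b : RT V) : RT V
  deriving DecidableEq

namespace RT

variable {V W : Type*}

def root : RT V → V
  | leaf v => v
  | join a _ => a.root

def verts : RT V → List V
  | leaf v => [v]
  | join a b => a.verts ++ b.verts

def edges : RT V → List (V × V)
  | leaf _ => []
  | join a b => (a.root, b.root) :: (a.edges ++ b.edges)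

def kids : RT V → List (RT V)
  | leaf _ => []
  | join a b => b :: a.kids

def mk (x : V) : List (RT V) → RT V
  | [] => leaf x
  | b :: l => join (mk x l) b

def map (e : V → W) : RT V → RT W
  | leaf v => leaf (e v)
  | join a b => join (a.map e) (b.map e)

theorem mk_root_kids (t : RT V) : mk t.root t.kids = t := by
  induction t with
  | leaf v => rfl
  | join a b iha _ => simp only [root, kids, mk, iha]

@[simp] theorem root_mk (x : V) (l : List (RT V)) : (mk x l).root = x := by
  induction l with
  | nil => rfl
  | cons b l ih => simpa only [mk, root] using ih

@[simp] theorem kids_mk (x : V) (l : List (RT V)) : (mk x l).kids = l := by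
  induction l with
  | nil => rfl
  | cons b l ih => simp only [mk, kids, ih]

theorem exists_mk (t : RT V) : ∃ x l, t = mk x l := ⟨_, _, (mk_root_kids t).symm⟩

theorem root_mem (t : RT V) : t.root ∈ t.verts := by
  induction t with
  | leaf v => simp [root, verts]
  | join a b iha _ => simp [root, verts, iha]

/-- adjacency -/
def Adj (t : RT V) (u v : V) : Prop := (u, v) ∈ t.edges ∨ (v, u) ∈ t.edges

theorem Adj.symm {t : RT V} {u v : V} (h : t.Adj u v) : t.Adj v u := Or.symm h

theorem adj_comm {t : RT V} {u v : V} : t.Adj u v ↔ t.Adj v u := ⟨Adj.symm, Adj.symm⟩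

theorem edges_mem {t : RT V} : ∀ {u v : V}, (u, v) ∈ t.edges → u ∈ t.verts ∧ v ∈ t.verts := by
  induction t with
  | leaf v => simp [edges]
  | join a b iha ihb =>
    intro u v h
    simp only [edges, List.mem_cons, List.mem_append, Prod.mk.injEq] at h
    simp only [verts, List.mem_append]
    rcases h with ⟨rfl, rfl⟩ | h | h
    · exact ⟨Or.inl a.root_mem, Or.inr b.root_mem⟩
    · exact ⟨Or.inl (iha h).1, Or.inl (iha h).2⟩
    · exact ⟨Or.inr (ihb h).1, Or.inr (ihb h).2⟩

theorem Adj.left {t : RT V} {u v : V} (h : t.Adj u v) : u ∈ t.verts :=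
  h.elim (fun h => (edges_mem h).1) (fun h => (edges_mem h).2)

theorem Adj.right {t : RT V} {u v : V} (h : t.Adj u v) : v ∈ t.verts := h.symm.left

theorem adj_join {a b : RT V} {u v : V} : (join a b).Adj u v ↔
    a.Adj u v ∨ b.Adj u v ∨ (u = a.root ∧ v = b.root) ∨ (v = a.root ∧ u = b.root) := by
  simp only [Adj, edges, List.mem_cons, List.mem_append, Prod.mk.injEq]
  tauto

@[simp] theorem adj_leaf {x u v : V} : (leaf x).Adj u v ↔ False := by simp [Adj, edges]

theorem mem_mk {x v : V} {l : List (RT V)} :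
    v ∈ (mk x l).verts ↔ v = x ∨ ∃ b ∈ l, v ∈ b.verts := by
  induction l with
  | nil => simp [mk, verts]
  | cons b l ih => simp only [mk, verts, List.mem_append, ih, List.mem_cons, exists_eq_or_imp]; grind

theorem adj_mk {x u v : V} {l : List (RT V)} :
    (mk x l).Adj u v ↔ (∃ b ∈ l, b.Adj u v) ∨ (u = x ∧ ∃ b ∈ l, v = b.root) ∨
      (v = x ∧ ∃ b ∈ l, u = b.root) := by
  induction l with
  | nil => simp [mk]
  | cons b l ih =>
    simp only [mk, adj_join, ih, root_mk, List.mem_cons, exists_eq_or_imp]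
    generalize (∃ b ∈ l, b.Adj u v) = p1, (∃ b ∈ l, v = b.root) = p2,
      (∃ b ∈ l, u = b.root) = p3
    grind

theorem verts_mk (x : V) (l : List (RT V)) :
    (mk x l).verts.Perm (x :: l.flatMap verts) := by
  induction l with
  | nil => simp [mk, verts]
  | cons b l ih =>
    simp only [mk, verts, List.flatMap_cons]
    refine (ih.append_right _).trans ?_
    simp only [List.cons_append]
    exact (List.perm_append_comm).cons x

theorem adj_irrefl {t : RT V} (h : t.verts.Nodup) : ∀ {u v : V}, t.Adj u v → u ≠ v := by
  induction t with
  | leaf v => simp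
  | join a b iha ihb =>
    intro u v huv
    simp only [verts, List.nodup_append] at h
    rw [adj_join] at huv
    rcases huv with h1 | h1 | ⟨rfl, rfl⟩ | ⟨rfl, rfl⟩
    · exact iha h.1 h1
    · exact ihb h.2.1 h1
    · exact h.2.2 _ a.root_mem _ b.root_mem
    · exact (h.2.2 _ a.root_mem _ b.root_mem).symm

/-- bounded distance -/
def D (t : RT V) : ℕ → V → V → Prop
  | 0, u, v => u = v
  | k + 1, u, v => u = v ∨ ∃ w, t.Adj u w ∧ D t k w v

theorem D.refl' {t : RT V} {u : V} : ∀ {k : ℕ}, t.D k u u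
  | 0 => Eq.refl u
  | _ + 1 => Or.inl (Eq.refl u)

theorem D.trans {t : RT V} {v w : V} {j : ℕ} (h2 : t.D j v w) :
    ∀ {i : ℕ} {u : V}, t.D i u v → t.D (i + j) u w := by
  have mono1 : ∀ (j : ℕ) (u w : V), t.D j u w → t.D (j + 1) u w := by
    intro j
    induction j with
    | zero => intro u w h; exact Or.inl h
    | succ j ih =>
      intro u w h
      rcases h with h | ⟨a, ha, h⟩
      · exact Or.inl h
      · exact Or.inr ⟨a, ha, ih _ _ h⟩
  have mono : ∀ (i j : ℕ) (u w : V), t.D j u w → t.D (i + j) u w := by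
    intro i j u w h
    induction i with
    | zero => simpa using h
    | succ i ih => rw [Nat.add_right_comm]; exact mono1 _ _ _ ih
  intro i
  induction i with
  | zero => intro u h; cases h; simpa using h2
  | succ i ih =>
    intro u h
    rcases h with h | ⟨a, ha, h⟩
    · subst h; exact mono _ _ _ _ h2
    · rw [Nat.add_right_comm]; exact Or.inr ⟨a, ha, ih h⟩

theorem D.mono {t : RT V} {u v : V} {i j : ℕ} (h : t.D i u v) (hij : i ≤ j) : t.D j u v := by
  have := D.trans (D.refl' (t := t) (u := v) (k := j - i)) h
  rwa [Nat.add_sub_cancel' hij] at this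

theorem D.of_adj {t : RT V} {u v : V} (h : t.Adj u v) : t.D 1 u v := Or.inr ⟨v, h, Eq.refl v⟩

theorem D.symm {t : RT V} {v : V} : ∀ {i : ℕ} {u : V}, t.D i u v → t.D i v u := by
  intro i
  induction i with
  | zero => intro u h; exact Eq.symm h
  | succ i ih =>
    intro u h
    rcases h with h | ⟨a, ha, h⟩
    · subst h; exact D.refl'
    · exact D.trans (D.of_adj ha.symm) (ih h)

theorem D.sub {t t' : RT V} {v : V} (ht : ∀ a b, t.Adj a b → t'.Adj a b) :
    ∀ {i : ℕ} {u : V}, t.D i u v → t'.D i u v := by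
  intro i
  induction i with
  | zero => intro u h; exact h
  | succ i ih =>
    intro u h
    rcases h with h | ⟨a, ha, h⟩
    · exact Or.inl h
    · exact Or.inr ⟨a, ht _ _ ha, ih h⟩

/-- `f` is a good 2-placement of `t` rooted at its root. -/
structure GM (t : RT V) (f : V → V) : Prop where
  maps : ∀ v ∈ t.verts, f v ∈ t.verts
  inj : ∀ u ∈ t.verts, ∀ v ∈ t.verts, f u = f v → u = v
  ne : ∀ v ∈ t.verts, f v ≠ v
  edge : ∀ u v, t.Adj u v → ¬ t.Adj (f u) (f v) ∧ t.D 5 (f u) (f v)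
  all4 : ∀ v ∈ t.verts, t.D 4 v (f v)
  root : t.Adj t.root (f t.root)
  nbr : ∀ y, t.Adj t.root y → t.D 2 y (f y)

/-- as `GM`, but edges at the root are not controlled. -/
structure SM (t : RT V) (f : V → V) : Prop where
  maps : ∀ v ∈ t.verts, f v ∈ t.verts
  inj : ∀ u ∈ t.verts, ∀ v ∈ t.verts, f u = f v → u = v
  ne : ∀ v ∈ t.verts, f v ≠ v
  edge : ∀ u v, t.Adj u v → u ≠ t.root → v ≠ t.root →
    ¬ t.Adj (f u) (f v) ∧ t.D 5 (f u) (f v)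
  all4 : ∀ v ∈ t.verts, t.D 4 v (f v)
  root : t.Adj t.root (f t.root)
  nbr : ∀ y, t.Adj t.root y → t.D 2 y (f y)

/-- `f` is a placement of `t` minus its root which can be hung below a vertex. -/
structure HM (j : ℕ) (t : RT V) (f : V → V) : Prop where
  maps : ∀ v ∈ t.verts, v ≠ t.root → f v ∈ t.verts ∧ f v ≠ t.root
  inj : ∀ u ∈ t.verts, u ≠ t.root → ∀ v ∈ t.verts, v ≠ t.root → f u = f v → u = v
  ne : ∀ v ∈ t.verts, v ≠ t.root → f v ≠ v
  edge : ∀ u v, t.Adj u v → u ≠ t.root → v ≠ t.root →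
    ¬ t.Adj (f u) (f v) ∧ t.D 5 (f u) (f v)
  all4 : ∀ v ∈ t.verts, v ≠ t.root → t.D 4 v (f v)
  nbr : ∀ y, t.Adj t.root y → t.D 2 y (f y) ∧ t.D j t.root (f y)

/-- placement of a tree `t` with a leaf `z'` at `z`; nothing is mapped to `z` and `z'` is
not mapped. -/
structure FM (t : RT V) (z z' : V) (f : V → V) : Prop where
  maps : ∀ v ∈ t.verts, v ≠ z' → f v ∈ t.verts ∧ f v ≠ z
  inj : ∀ u ∈ t.verts, u ≠ z' → ∀ v ∈ t.verts, v ≠ z' → f u = f v → u = v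
  ne : ∀ v ∈ t.verts, v ≠ z' → f v ≠ v
  edge : ∀ u v, t.Adj u v → u ≠ z' → v ≠ z' →
    ¬ t.Adj (f u) (f v) ∧ t.D 5 (f u) (f v)
  all4 : ∀ v ∈ t.verts, v ≠ z' → t.D 4 v (f v)
  root : t.Adj t.root (f t.root)
  nbr : ∀ y, t.Adj t.root y → y ≠ z' → t.D 2 y (f y)
  z1 : f z ≠ z'
  z2 : ¬ t.Adj (f z) z
  z3 : t.D 2 (f z) z

def Good (t : RT V) : Prop := ∃ f, GM t f
def Semi (t : RT V) : Prop := ∃ f, SM t f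
def Hang (j : ℕ) (t : RT V) : Prop := ∃ f, HM j t f

theorem Good.semi {t : RT V} (h : Good t) : Semi t := by
  obtain ⟨f, h⟩ := h
  exact ⟨f, h.maps, h.inj, h.ne, fun u v huv _ _ => h.edge u v huv, h.all4, h.root, h.nbr⟩

/-- same rooted graph -/
structure Eqv (t t' : RT V) : Prop where
  root : t.root = t'.root
  verts : t.verts.Perm t'.verts
  adj : ∀ u v, t.Adj u v ↔ t'.Adj u v

theorem Good.eqv {t t' : RT V} (h : Good t) (e : Eqv t t') : Good t' := by
  obtain ⟨f, h⟩ := h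
  have hm : ∀ v, v ∈ t'.verts ↔ v ∈ t.verts := fun v => e.verts.symm.mem_iff
  have hD : ∀ k u v, t.D k u v → t'.D k u v := fun k u v h => D.sub (fun a b => (e.adj a b).1) h
  refine ⟨f, ?_, ?_, ?_, ?_, ?_, ?_, ?_⟩
  · intro v hv; rw [hm] at *; exact h.maps v hv
  · intro u hu v hv; rw [hm] at *; exact h.inj u hu v hv
  · intro v hv; rw [hm] at *; exact h.ne v hv
  · intro u v huv; rw [← e.adj] at *
    exact ⟨(h.edge u v huv).1, hD _ _ _ (h.edge u v huv).2⟩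
  · intro v hv; rw [hm] at *; exact hD _ _ _ (h.all4 v hv)
  · rw [← e.root, ← e.adj]; exact h.root
  · intro y hy; rw [← e.root, ← e.adj] at hy; exact hD _ _ _ (h.nbr y hy)

open Classical in
theorem glue {t t' w : RT V} {f g : V → V} {u : V} {i j : ℕ} (hf : GM t f) (hu : u ∈ t.verts)
    (hd : t.D i u (f u)) (hij : i + j ≤ 5) (hg : HM j w g) (hr : w.root = u)
    (hirr : ∀ a b, w.Adj a b → a ≠ b)
    (hdisj : ∀ v, v ∈ t.verts → v ∈ w.verts → v = u)
    (hv : ∀ v, v ∈ t'.verts ↔ v ∈ t.verts ∨ v ∈ w.verts)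
    (ha : ∀ a b, t'.Adj a b ↔ t.Adj a b ∨ w.Adj a b) (hroot : t'.root = t.root) : Good t' := by
  have Dt : ∀ {k a b}, t.D k a b → t'.D k a b :=
    fun h => D.sub (fun a b h => (ha a b).2 (Or.inl h)) h
  have Dw : ∀ {k a b}, w.D k a b → t'.D k a b :=
    fun h => D.sub (fun a b h => (ha a b).2 (Or.inr h)) h
  subst hr
  have key : ∀ r, w.Adj w.root r → ¬ t'.Adj (f w.root) (g r) ∧ t'.D 5 (f w.root) (g r) := by
    intro r hr
    have hne : r ≠ w.root := (hirr _ _ hr).symm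
    have h1 := hg.maps r hr.right hne
    constructor
    · rw [ha]
      rintro (h | h)
      · exact h1.2 (hdisj _ h.right h1.1)
      · exact hf.ne _ hu (hdisj _ (hf.maps _ hu) h.left)
    · exact (D.trans (Dw (hg.nbr r hr).2) (Dt hd).symm).mono hij
  refine ⟨fun v => if v ∈ t.verts then f v else g v, ?_, ?_, ?_, ?_, ?_, ?_, ?_⟩
  · intro v hvv
    rw [hv] at hvv ⊢
    split_ifs with h
    · exact Or.inl (hf.maps v h)
    · exact Or.inr (hg.maps v (hvv.resolve_left h) (fun e => h (e ▸ hu))).1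
  · intro a haa b hbb
    rw [hv] at haa hbb
    split_ifs with h1 h2 h2
    · exact hf.inj a h1 b h2
    · intro e
      have h3 := hg.maps b (hbb.resolve_left h2) (fun e => h2 (e ▸ hu))
      exact absurd (hdisj _ (hf.maps a h1) (e ▸ h3.1)) (e ▸ h3.2)
    · intro e
      have h3 := hg.maps a (haa.resolve_left h1) (fun e => h1 (e ▸ hu))
      exact absurd (hdisj _ (hf.maps b h2) (e ▸ h3.1)) (e ▸ h3.2)
    · exact hg.inj a (haa.resolve_left h1) (fun e => h1 (e ▸ hu)) b (hbb.resolve_left h2)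
        (fun e => h2 (e ▸ hu))
  · intro v hvv
    rw [hv] at hvv
    split_ifs with h
    · exact hf.ne v h
    · exact hg.ne v (hvv.resolve_left h) (fun e => h (e ▸ hu))
  · intro a b hab
    rw [ha] at hab
    rcases hab with hab | hab
    · rw [if_pos hab.left, if_pos hab.right]
      obtain ⟨h1, h2⟩ := hf.edge a b hab
      refine ⟨?_, Dt h2⟩
      rw [ha]
      rintro (h | h)
      · exact h1 h
      · have e1 := hdisj _ (hf.maps _ hab.left) h.left
        have e2 := hdisj _ (hf.maps _ hab.right) h.right
        exact hirr _ _ h (e1.trans e2.symm)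
    · by_cases ha1 : a = w.root
      · subst ha1
        have hb1 : b ∉ t.verts := fun hb => hirr _ _ hab (hdisj b hb hab.right).symm
        rw [if_pos hu, if_neg hb1]
        exact key b hab
      · by_cases hb1 : b = w.root
        · subst hb1
          have ha2 : a ∉ t.verts := fun hb => ha1 (hdisj a hb hab.left)
          rw [if_pos hu, if_neg ha2]
          have := key a hab.symm
          exact ⟨fun h => this.1 h.symm, this.2.symm⟩
        · have ha2 : a ∉ t.verts := fun hb => ha1 (hdisj a hb hab.left)
          have hb2 : b ∉ t.verts := fun hb => hb1 (hdisj b hb hab.right)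
          rw [if_neg ha2, if_neg hb2]
          obtain ⟨h1, h2⟩ := hg.edge a b hab ha1 hb1
          refine ⟨?_, Dw h2⟩
          rw [ha]
          rintro (h | h)
          · exact (hg.maps a hab.left ha1).2 (hdisj _ h.left (hg.maps a hab.left ha1).1)
          · exact h1 h
  · intro v hvv
    rw [hv] at hvv
    split_ifs with h
    · exact Dt (hf.all4 v h)
    · exact Dw (hg.all4 v (hvv.resolve_left h) (fun e => h (e ▸ hu)))
  · rw [hroot]
    rw [if_pos t.root_mem, ha]
    exact Or.inl hf.root
  · intro y hy
    rw [hroot, ha] at hy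
    rcases hy with hy | hy
    · rw [if_pos hy.right]; exact Dt (hf.nbr y hy)
    · have e := hdisj _ t.root_mem hy.left
      have hy2 : y ∉ t.verts := fun h => hirr _ _ hy (e.trans (hdisj _ h hy.right).symm)
      rw [if_neg hy2]
      rw [e] at hy
      exact Dw (hg.nbr y hy).1

open Classical in
theorem graft {t s c : RT V} {f g : V → V} {z z' : V} (hz : c.root = z) (hz' : f z = z')
    (hf : SM c f) (hg : FM s z z' g) (hr : t.root = s.root) (hrz : s.root ≠ z)
    (hrz' : s.root ≠ z')
    (hirrs : ∀ a b, s.Adj a b → a ≠ b) (hirrc : ∀ a b, c.Adj a b → a ≠ b)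
    (hzs : z ∈ s.verts)
    (hsc : ∀ v, v ∈ s.verts → v ∈ c.verts → v = z ∨ v = z')
    (hv : ∀ v, v ∈ t.verts ↔ (v ∈ s.verts ∧ v ≠ z') ∨ v ∈ c.verts)
    (ha1 : ∀ a b, s.Adj a b → t.Adj a b)
    (ha2 : ∀ a b, c.Adj a b → t.Adj a b)
    (ha3 : ∀ a b, t.Adj a b → c.Adj a b ∨ (s.Adj a b ∧ a ≠ z' ∧ b ≠ z')) : Good t := by
  have Ds : ∀ {k a b}, s.D k a b → t.D k a b := fun h => D.sub ha1 h
  have Dc : ∀ {k a b}, c.D k a b → t.D k a b := fun h => D.sub ha2 h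
  have hzc : z ∈ c.verts := hz ▸ c.root_mem
  have hzz : z ≠ z' := by
    have := hirrc _ _ hf.root
    rw [hz, hz'] at this
    exact this
  have hz'c : z' ∈ c.verts := hz' ▸ hf.maps z hzc
  have hfz' : ∀ v ∈ c.verts, v ≠ z → f v ≠ z' := fun v hv hvz e =>
    hvz (hf.inj v hv z hzc (e.trans hz'.symm))
  have nc : ∀ v ∈ s.verts, v ≠ z' → ¬ (v ∈ c.verts ∧ v ≠ z) := fun v hvs hvz h => by
    rcases hsc v hvs h.1 with h1 | h1
    · exact h.2 h1
    · exact hvz h1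
  have gzc : g z ∉ c.verts := fun h => by
    have h1 := hg.maps z hzs hzz
    rcases hsc _ h1.1 h with h2 | h2
    · exact h1.2 h2
    · exact hg.z1 h2
  have key : ∀ b, c.Adj z b → ¬ t.Adj (g z) (f b) ∧ t.D 5 (g z) (f b) := by
    intro b hb
    have hbz : b ≠ z := (hirrc _ _ hb).symm
    constructor
    · intro h
      rcases ha3 _ _ h with h | ⟨h, h1, h2⟩
      · exact gzc h.left
      · rcases hsc _ h.right (hf.maps b hb.right) with h3 | h3
        · rw [h3] at h; exact hg.z2 h
        · exact h2 h3
    · have h1 : c.D 3 z (f b) := D.trans (hf.nbr b (hz ▸ hb)) (D.of_adj hb)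
      exact D.trans (Dc h1) (Ds hg.z3)
  refine ⟨fun v => if v ∈ c.verts ∧ v ≠ z then f v else g v, ?_, ?_, ?_, ?_, ?_, ?_, ?_⟩
  · intro v hvv
    rw [hv] at hvv
    split_ifs with h
    · rw [hv]; exact Or.inr (hf.maps v h.1)
    · have hs : v ∈ s.verts ∧ v ≠ z' := by
        rcases hvv with h1 | h1
        · exact h1
        · have : v = z := by by_contra h2; exact h ⟨h1, h2⟩
          subst this; exact ⟨hzs, hzz⟩
      rw [hv]
      by_cases e : g v = z'
      · exact Or.inr (e ▸ hz'c)
      · exact Or.inl ⟨(hg.maps v hs.1 hs.2).1, e⟩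
  · have hs : ∀ v ∈ t.verts, ¬ (v ∈ c.verts ∧ v ≠ z) → v ∈ s.verts ∧ v ≠ z' := by
      intro v hvv h
      rcases (hv v).1 hvv with h1 | h1
      · exact h1
      · have : v = z := by by_contra h2; exact h ⟨h1, h2⟩
        subst this; exact ⟨hzs, hzz⟩
    have cross : ∀ a b, (a ∈ c.verts ∧ a ≠ z) → (b ∈ s.verts ∧ b ≠ z') → f a ≠ g b := by
      intro a b h1 h2 e
      have h3 := hg.maps b h2.1 h2.2
      rcases hsc _ h3.1 (e ▸ hf.maps a h1.1) with h4 | h4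
      · exact h3.2 h4
      · exact hfz' a h1.1 h1.2 (e.trans h4)
    intro a haa b hbb
    split_ifs with h1 h2 h2
    · exact hf.inj a h1.1 b h2.1
    · intro e; exact absurd e (cross a b h1 (hs b hbb h2))
    · intro e; exact absurd e.symm (cross b a h2 (hs a haa h1))
    · have h3 := hs a haa h1
      have h4 := hs b hbb h2
      exact hg.inj a h3.1 h3.2 b h4.1 h4.2
  · intro v hvv
    rw [hv] at hvv
    split_ifs with h
    · exact hf.ne v h.1
    · rcases hvv with h1 | h1
      · exact hg.ne v h1.1 h1.2
      · have : v = z := by by_contra h2; exact h ⟨h1, h2⟩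
        subst this; exact hg.ne v hzs hzz
  · intro a b hab
    rcases ha3 _ _ hab with h | ⟨h, h1, h2⟩
    · by_cases e1 : a = z
      · subst e1
        have hb : b ≠ a := (hirrc _ _ h).symm
        rw [if_neg (fun h => h.2 rfl), if_pos ⟨h.right, hb⟩]
        exact key b h
      · by_cases e2 : b = z
        · subst e2
          rw [if_pos ⟨h.left, e1⟩, if_neg (fun h => h.2 rfl)]
          have := key a h.symm
          exact ⟨fun h => this.1 h.symm, this.2.symm⟩
        · rw [if_pos ⟨h.left, e1⟩, if_pos ⟨h.right, e2⟩]
          obtain ⟨h3, h4⟩ := hf.edge a b h (hz ▸ e1) (hz ▸ e2)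
          refine ⟨?_, Dc h4⟩
          intro h5
          rcases ha3 _ _ h5 with h5 | ⟨h5, h6, h7⟩
          · exact h3 h5
          · have e3 := (hsc _ h5.left (hf.maps a h.left)).resolve_right h6
            have e4 := (hsc _ h5.right (hf.maps b h.right)).resolve_right h7
            exact hirrs _ _ h5 (e3.trans e4.symm)
    · rw [if_neg (nc a h.left h1), if_neg (nc b h.right h2)]
      obtain ⟨h3, h4⟩ := hg.edge a b h h1 h2
      refine ⟨?_, Ds h4⟩
      intro h5
      rcases ha3 _ _ h5 with h5 | ⟨h5, -, -⟩
      · have m1 := hg.maps a h.left h1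
        have m2 := hg.maps b h.right h2
        have e3 := (hsc _ m1.1 h5.left).resolve_left m1.2
        have e4 := (hsc _ m2.1 h5.right).resolve_left m2.2
        exact hirrc _ _ h5 (e3.trans e4.symm)
      · exact h3 h5
  · intro v hvv
    rw [hv] at hvv
    split_ifs with h
    · exact Dc (hf.all4 v h.1)
    · rcases hvv with h1 | h1
      · exact Ds (hg.all4 v h1.1 h1.2)
      · have : v = z := by by_contra h2; exact h ⟨h1, h2⟩
        subst this; exact Ds (hg.all4 v hzs hzz)
  · rw [hr]
    rw [if_neg (nc _ s.root_mem hrz')]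
    exact ha1 _ _ hg.root
  · intro y hy
    rw [hr] at hy
    rcases ha3 _ _ hy with h | ⟨h, -, h2⟩
    · rcases hsc _ s.root_mem h.left with h1 | h1
      · exact absurd h1 hrz
      · exact absurd h1 hrz'
    · rw [if_neg (nc y h.right h2)]
      exact Ds (hg.nbr y h h2)

/-! ### Relabelling and explicit checks -/

theorem root_map (e : V → W) (t : RT V) : (t.map e).root = e t.root := by
  induction t with
  | leaf v => rfl
  | join a b iha _ => simpa only [map, root] using iha

theorem verts_map (e : V → W) (t : RT V) : (t.map e).verts = t.verts.map e := by
  induction t with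
  | leaf v => rfl
  | join a b iha ihb => simp only [map, verts, iha, ihb, List.map_append]

theorem edges_map (e : V → W) (t : RT V) :
    (t.map e).edges = t.edges.map (fun p => (e p.1, e p.2)) := by
  induction t with
  | leaf v => rfl
  | join a b iha ihb =>
    simp only [map, edges, iha, ihb, List.map_append, List.map_cons, root_map]

theorem adj_map {e : V → W} {t : RT V} {u v : W} :
    (t.map e).Adj u v ↔ ∃ i j, t.Adj i j ∧ e i = u ∧ e j = v := by
  simp only [Adj, edges_map, List.mem_map, Prod.mk.injEq, Prod.exists]
  constructor
  · rintro (⟨i, j, h, h1, h2⟩ | ⟨i, j, h, h1, h2⟩)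
    · exact ⟨i, j, Or.inl h, h1, h2⟩
    · exact ⟨j, i, Or.inr h, h2, h1⟩
  · rintro ⟨i, j, h | h, h1, h2⟩
    · exact Or.inl ⟨i, j, h, h1, h2⟩
    · exact Or.inr ⟨j, i, h, h2, h1⟩

theorem D.map {t : RT V} (e : V → W) {v : V} : ∀ {k : ℕ} {u : V}, t.D k u v →
    (t.map e).D k (e u) (e v) := by
  intro k
  induction k with
  | zero => intro u h; exact congrArg e h
  | succ k ih =>
    intro u h
    rcases h with h | ⟨w, hw, h⟩
    · exact Or.inl (congrArg e h)
    · exact Or.inr ⟨e w, adj_map.2 ⟨u, w, hw, rfl, rfl⟩, ih h⟩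

section transport

variable {e : V → W} {t : RT V}

theorem adj_map'
    (he : ∀ i ∈ t.verts, ∀ j ∈ t.verts, e i = e j → i = j)
    {i j : V} (hi : i ∈ t.verts) (hj : j ∈ t.verts) :
    (t.map e).Adj (e i) (e j) ↔ t.Adj i j := by
  rw [adj_map]
  constructor
  · rintro ⟨a, b, h, h1, h2⟩
    rwa [he a h.left i hi h1, he b h.right j hj h2] at h
  · intro h; exact ⟨i, j, h, rfl, rfl⟩

theorem exists_conj
    (he : ∀ i ∈ t.verts, ∀ j ∈ t.verts, e i = e j → i = j)
    (f : V → V) : ∃ F : W → W, ∀ i ∈ t.verts, F (e i) = e (f i) := by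
  classical
  refine ⟨fun w => if h : ∃ i ∈ t.verts, e i = w then e (f h.choose) else w, ?_⟩
  intro i hi
  have h : ∃ j ∈ t.verts, e j = e i := ⟨i, hi, rfl⟩
  simp only [dif_pos h]
  rw [he _ h.choose_spec.1 i hi h.choose_spec.2]

theorem GM.good_map
    (he : ∀ i ∈ t.verts, ∀ j ∈ t.verts, e i = e j → i = j)
    {f : V → V} (h : GM t f) : Good (t.map e) := by
  obtain ⟨F, hF⟩ := exists_conj he f
  refine ⟨F, ?_, ?_, ?_, ?_, ?_, ?_, ?_⟩
  · rw [verts_map]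
    simp only [List.mem_map, forall_exists_index, and_imp, forall_apply_eq_imp_iff₂]
    intro i hi; rw [hF i hi]; exact ⟨_, h.maps i hi, rfl⟩
  · rw [verts_map]
    simp only [List.mem_map, forall_exists_index, and_imp, forall_apply_eq_imp_iff₂]
    intro i hi j hj; rw [hF i hi, hF j hj]
    intro h1
    rw [h.inj i hi j hj (he _ (h.maps i hi) _ (h.maps j hj) h1)]
  · rw [verts_map]
    simp only [List.mem_map, forall_exists_index, and_imp, forall_apply_eq_imp_iff₂]
    intro i hi; rw [hF i hi]
    intro h1
    exact h.ne i hi (he _ (h.maps i hi) _ hi h1)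
  · intro u v huv
    obtain ⟨i, j, hij, rfl, rfl⟩ := adj_map.1 huv
    rw [hF i hij.left, hF j hij.right, adj_map' he (h.maps i hij.left) (h.maps j hij.right)]
    exact ⟨(h.edge i j hij).1, D.map e (h.edge i j hij).2⟩
  · rw [verts_map]
    simp only [List.mem_map, forall_exists_index, and_imp, forall_apply_eq_imp_iff₂]
    intro i hi; rw [hF i hi]
    exact D.map e (h.all4 i hi)
  · rw [root_map, hF _ t.root_mem]
    exact adj_map.2 ⟨_, _, h.root, rfl, rfl⟩
  · intro y hy
    obtain ⟨i, j, hij, h1, rfl⟩ := adj_map.1 hy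
    rw [root_map] at h1
    have h2 := he _ hij.left _ t.root_mem h1
    subst h2
    rw [hF j hij.right]
    exact D.map e (h.nbr j hij)

theorem SM.semi_map
    (he : ∀ i ∈ t.verts, ∀ j ∈ t.verts, e i = e j → i = j)
    {f : V → V} (h : SM t f) : Semi (t.map e) := by
  obtain ⟨F, hF⟩ := exists_conj he f
  refine ⟨F, ?_, ?_, ?_, ?_, ?_, ?_, ?_⟩
  · rw [verts_map]
    simp only [List.mem_map, forall_exists_index, and_imp, forall_apply_eq_imp_iff₂]
    intro i hi; rw [hF i hi]; exact ⟨_, h.maps i hi, rfl⟩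
  · rw [verts_map]
    simp only [List.mem_map, forall_exists_index, and_imp, forall_apply_eq_imp_iff₂]
    intro i hi j hj; rw [hF i hi, hF j hj]
    intro h1
    rw [h.inj i hi j hj (he _ (h.maps i hi) _ (h.maps j hj) h1)]
  · rw [verts_map]
    simp only [List.mem_map, forall_exists_index, and_imp, forall_apply_eq_imp_iff₂]
    intro i hi; rw [hF i hi]
    intro h1
    exact h.ne i hi (he _ (h.maps i hi) _ hi h1)
  · intro u v huv
    obtain ⟨i, j, hij, rfl, rfl⟩ := adj_map.1 huv
    rw [root_map]
    intro h1 h2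
    have h3 := h.edge i j hij (fun h => h1 (by rw [h])) (fun h => h2 (by rw [h]))
    rw [hF i hij.left, hF j hij.right, adj_map' he (h.maps i hij.left) (h.maps j hij.right)]
    exact ⟨h3.1, D.map e h3.2⟩
  · rw [verts_map]
    simp only [List.mem_map, forall_exists_index, and_imp, forall_apply_eq_imp_iff₂]
    intro i hi; rw [hF i hi]
    exact D.map e (h.all4 i hi)
  · rw [root_map, hF _ t.root_mem]
    exact adj_map.2 ⟨_, _, h.root, rfl, rfl⟩
  · intro y hy
    obtain ⟨i, j, hij, h1, rfl⟩ := adj_map.1 hy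
    rw [root_map] at h1
    have h2 := he _ hij.left _ t.root_mem h1
    subst h2
    rw [hF j hij.right]
    exact D.map e (h.nbr j hij)

theorem HM.hang_map
    (he : ∀ i ∈ t.verts, ∀ j ∈ t.verts, e i = e j → i = j)
    {f : V → V} {k : ℕ} (h : HM k t f) : Hang k (t.map e) := by
  obtain ⟨F, hF⟩ := exists_conj he f
  have hr : ∀ i, e i ≠ e t.root → i ≠ t.root := fun i h h1 => h (by rw [h1])
  refine ⟨F, ?_, ?_, ?_, ?_, ?_, ?_⟩
  · rw [verts_map, root_map]
    simp only [List.mem_map, forall_exists_index, and_imp, forall_apply_eq_imp_iff₂]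
    intro i hi hi'; rw [hF i hi]
    have h1 := h.maps i hi (hr i hi')
    exact ⟨⟨_, h1.1, rfl⟩, fun h2 => h1.2 (he _ h1.1 _ t.root_mem h2)⟩
  · rw [verts_map, root_map]
    simp only [List.mem_map, forall_exists_index, and_imp, forall_apply_eq_imp_iff₂]
    intro i hi hi' j hj hj'; rw [hF i hi, hF j hj]
    intro h1
    rw [h.inj i hi (hr i hi') j hj (hr j hj')
      (he _ (h.maps i hi (hr i hi')).1 _ (h.maps j hj (hr j hj')).1 h1)]
  · rw [verts_map, root_map]
    simp only [List.mem_map, forall_exists_index, and_imp, forall_apply_eq_imp_iff₂]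
    intro i hi hi'; rw [hF i hi]
    intro h1
    exact h.ne i hi (hr i hi') (he _ (h.maps i hi (hr i hi')).1 _ hi h1)
  · intro u v huv
    obtain ⟨i, j, hij, rfl, rfl⟩ := adj_map.1 huv
    rw [root_map]
    intro h1 h2
    have h3 := h.edge i j hij (hr i h1) (hr j h2)
    rw [hF i hij.left, hF j hij.right,
      adj_map' he (h.maps i hij.left (hr i h1)).1 (h.maps j hij.right (hr j h2)).1]
    exact ⟨h3.1, D.map e h3.2⟩
  · rw [verts_map, root_map]
    simp only [List.mem_map, forall_exists_index, and_imp, forall_apply_eq_imp_iff₂]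
    intro i hi hi'; rw [hF i hi]
    exact D.map e (h.all4 i hi (hr i hi'))
  · intro y hy
    obtain ⟨i, j, hij, h1, rfl⟩ := adj_map.1 hy
    rw [root_map] at h1 ⊢
    have h2 := he _ hij.left _ t.root_mem h1
    subst h2
    rw [hF j hij.right]
    exact ⟨D.map e (h.nbr j hij).1, D.map e (h.nbr j hij).2⟩

theorem FM.map
    (he : ∀ i ∈ t.verts, ∀ j ∈ t.verts, e i = e j → i = j)
    {f : V → V} {z z' : V} (hz : z ∈ t.verts) (hz' : z' ∈ t.verts) (hzz : z ≠ z')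
    (h : FM t z z' f) : ∃ F, FM (t.map e) (e z) (e z') F := by
  obtain ⟨F, hF⟩ := exists_conj he f
  have hr : ∀ i, e i ≠ e z' → i ≠ z' := fun i h h1 => h (by rw [h1])
  refine ⟨F, ?_, ?_, ?_, ?_, ?_, ?_, ?_, ?_, ?_, ?_⟩
  · rw [verts_map]
    simp only [List.mem_map, forall_exists_index, and_imp, forall_apply_eq_imp_iff₂]
    intro i hi hi'; rw [hF i hi]
    have h1 := h.maps i hi (hr i hi')
    exact ⟨⟨_, h1.1, rfl⟩, fun h2 => h1.2 (he _ h1.1 _ hz h2)⟩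
  · rw [verts_map]
    simp only [List.mem_map, forall_exists_index, and_imp, forall_apply_eq_imp_iff₂]
    intro i hi hi' j hj hj'; rw [hF i hi, hF j hj]
    intro h1
    rw [h.inj i hi (hr i hi') j hj (hr j hj')
      (he _ (h.maps i hi (hr i hi')).1 _ (h.maps j hj (hr j hj')).1 h1)]
  · rw [verts_map]
    simp only [List.mem_map, forall_exists_index, and_imp, forall_apply_eq_imp_iff₂]
    intro i hi hi'; rw [hF i hi]
    intro h1
    exact h.ne i hi (hr i hi') (he _ (h.maps i hi (hr i hi')).1 _ hi h1)
  · intro u v huv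
    obtain ⟨i, j, hij, rfl, rfl⟩ := adj_map.1 huv
    intro h1 h2
    have h3 := h.edge i j hij (hr i h1) (hr j h2)
    rw [hF i hij.left, hF j hij.right,
      adj_map' he (h.maps i hij.left (hr i h1)).1 (h.maps j hij.right (hr j h2)).1]
    exact ⟨h3.1, D.map e h3.2⟩
  · rw [verts_map]
    simp only [List.mem_map, forall_exists_index, and_imp, forall_apply_eq_imp_iff₂]
    intro i hi hi'; rw [hF i hi]
    exact D.map e (h.all4 i hi (hr i hi'))
  · rw [root_map, hF _ t.root_mem]
    exact adj_map.2 ⟨_, _, h.root, rfl, rfl⟩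
  · intro y hy
    obtain ⟨i, j, hij, h1, rfl⟩ := adj_map.1 hy
    rw [root_map] at h1
    have h2 := he _ hij.left _ t.root_mem h1
    subst h2
    rw [hF j hij.right]
    intro h3
    exact D.map e (h.nbr j hij (hr j h3))
  · rw [hF z hz]
    exact fun h1 => h.z1 (he _ (h.maps z hz hzz).1 _ hz' h1)
  · rw [hF z hz, adj_map' he (h.maps z hz hzz).1 hz]
    exact h.z2
  · rw [hF z hz]
    exact D.map e h.z3

end transport

/-- canonical numbering of the vertices -/
def num : RT V → ℕ → RT ℕ
  | leaf _, k => leaf k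
  | join a b, k => join (a.num k) (b.num (k + a.verts.length))

def shape (t : RT V) : RT Unit := t.map (fun _ => ())

theorem length_verts_map (e : V → W) (t : RT V) : (t.map e).verts.length = t.verts.length := by
  rw [verts_map, List.length_map]

theorem num_shape (t : RT V) : ∀ k, t.shape.num k = t.num k := by
  induction t with
  | leaf v => intro k; rfl
  | join a b iha ihb =>
    intro k
    have h1 := iha k
    have h2 := ihb (k + a.verts.length)
    simp only [shape] at h1 h2
    simp only [shape, map, num, h1, length_verts_map, h2]

theorem map_num (t : RT V) : ∀ (k : ℕ) (e : ℕ → V),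
    (∀ i v, t.verts[i]? = some v → e (k + i) = v) → (t.num k).map e = t := by
  induction t with
  | leaf v => intro k e h; simp only [num, map]; rw [← h 0 v rfl]; rfl
  | join a b iha ihb =>
    intro k e h
    simp only [num, map]
    rw [iha k e, ihb]
    · intro i v hi
      rw [Nat.add_assoc]
      refine h _ v ?_
      rw [verts, List.getElem?_append_right (Nat.le_add_right _ _), Nat.add_sub_cancel_left]
      exact hi
    · intro i v hi
      refine h i v ?_
      rw [verts, List.getElem?_append_left]
      · exact hi
      · exact (List.getElem?_eq_some_iff.1 hi).1

theorem mem_num {t : RT V} : ∀ {k i : ℕ}, i ∈ (t.num k).verts → k ≤ i ∧ i < k + t.verts.length := by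
  induction t with
  | leaf v => intro k i h; simp [num, verts] at h ⊢; omega
  | join a b iha ihb =>
    intro k i h
    simp only [num, verts, List.mem_append, List.length_append] at h ⊢
    rcases h with h | h
    · have := iha h; omega
    · have := ihb h; omega

theorem exists_label (t : RT V) (s : RT Unit) (hs : t.shape = s) (h : t.verts.Nodup) :
    ∃ e : ℕ → V, (s.num 0).map e = t ∧
      ∀ i ∈ (s.num 0).verts, ∀ j ∈ (s.num 0).verts, e i = e j → i = j := by
  subst hs
  rw [num_shape]
  refine ⟨fun i => t.verts.getD i t.root, map_num t 0 _ ?_, ?_⟩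
  · intro i v hi
    simp [hi]
  · intro i hi j hj hij
    have h1 := (mem_num hi).2
    have h2 := (mem_num hj).2
    simp only [Nat.zero_add] at h1 h2
    simp only [List.getD_eq_getElem?_getD, List.getElem?_eq_getElem h1,
      List.getElem?_eq_getElem h2, Option.getD_some] at hij
    exact (List.Nodup.getElem_inj_iff h).1 hij

/-! Boolean checks -/

def adjB (E : List (ℕ × ℕ)) (u v : ℕ) : Bool :=
  E.any fun p => (Nat.beq p.1 u && Nat.beq p.2 v) || (Nat.beq p.1 v && Nat.beq p.2 u)

def dB (E : List (ℕ × ℕ)) : ℕ → ℕ → ℕ → Bool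
  | 0, u, v => Nat.beq u v
  | k + 1, u, v => Nat.beq u v ||
      E.any fun p => (Nat.beq p.1 u && dB E k p.2 v) || (Nat.beq p.2 u && dB E k p.1 v)

theorem adjB_iff (t : RT ℕ) (u v : ℕ) : adjB t.edges u v = true ↔ t.Adj u v := by
  simp only [adjB, List.any_eq_true, Bool.or_eq_true, Bool.and_eq_true, Nat.beq_eq, Adj,
    Prod.exists]
  constructor
  · rintro ⟨a, b, h, ⟨rfl, rfl⟩ | ⟨rfl, rfl⟩⟩
    · exact Or.inl h
    · exact Or.inr h
  · rintro (h | h)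
    · exact ⟨_, _, h, Or.inl ⟨rfl, rfl⟩⟩
    · exact ⟨_, _, h, Or.inr ⟨rfl, rfl⟩⟩

theorem dB_iff (t : RT ℕ) (v : ℕ) : ∀ (k u : ℕ), dB t.edges k u v = true ↔ t.D k u v := by
  intro k
  induction k with
  | zero => intro u; simp [dB, D]
  | succ k ih =>
    intro u
    simp only [dB, D, Bool.or_eq_true, List.any_eq_true, Bool.and_eq_true, Nat.beq_eq, ih, Adj,
      Prod.exists]
    constructor
    · rintro (h | ⟨a, b, h, ⟨rfl, h1⟩ | ⟨rfl, h1⟩⟩)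
      · exact Or.inl h
      · exact Or.inr ⟨_, Or.inl h, h1⟩
      · exact Or.inr ⟨_, Or.inr h, h1⟩
    · rintro (h | ⟨w, h | h, h1⟩)
      · exact Or.inl h
      · exact Or.inr ⟨_, _, h, Or.inl ⟨rfl, h1⟩⟩
      · exact Or.inr ⟨_, _, h, Or.inr ⟨rfl, h1⟩⟩

/-- common check: `f` maps `dom` injectively to `cod`, without fixed points, and the edges
of `E1` go to non-edges of `E` joining vertices at distance at most 5. -/
def coreB (E E1 : List (ℕ × ℕ)) (dom cod : List ℕ) (f : ℕ → ℕ) : Bool :=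
  (dom.all fun v => cod.elem (f v) && (!Nat.beq (f v) v && dB E 4 v (f v))) &&
  ((dom.all fun u => dom.all fun v => !Nat.beq (f u) (f v) || Nat.beq u v) &&
  (E1.all fun p => !adjB E (f p.1) (f p.2) && dB E 5 (f p.1) (f p.2)))

/-- check at the root -/
def nbrB (E : List (ℕ × ℕ)) (r : ℕ) (q : ℕ → Bool) : Bool :=
  E.all fun p => (!Nat.beq p.1 r || q p.2) && (!Nat.beq p.2 r || q p.1)

theorem nbrB_spec {t : RT ℕ} {r : ℕ} {q : ℕ → Bool} (h : nbrB t.edges r q = true) :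
    ∀ y, t.Adj r y → q y = true := by
  simp only [nbrB, List.all_eq_true, Bool.and_eq_true, Bool.or_eq_true, Prod.forall] at h
  rintro y (hy | hy)
  · have := (h _ _ hy).1
    simpa using this
  · have := (h _ _ hy).2
    simpa using this

theorem coreB_spec {t : RT ℕ} {P : ℕ → Prop} [DecidablePred P] {dom cod : List ℕ} {f : ℕ → ℕ}
    (h : coreB t.edges (t.edges.filter fun p => decide (P p.1) && decide (P p.2)) dom cod f
      = true) :
    (∀ v ∈ dom, f v ∈ cod) ∧ (∀ u ∈ dom, ∀ v ∈ dom, f u = f v → u = v) ∧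
    (∀ v ∈ dom, f v ≠ v) ∧
    (∀ u v, t.Adj u v → P u → P v → ¬ t.Adj (f u) (f v) ∧ t.D 5 (f u) (f v)) ∧
    (∀ v ∈ dom, t.D 4 v (f v)) := by
  simp only [coreB, Bool.and_eq_true, List.all_eq_true, Bool.not_eq_true', Bool.or_eq_true,
    Nat.beq_eq, Prod.forall, List.mem_filter, decide_eq_true_eq, dB_iff, List.elem_eq_mem] at h
  obtain ⟨h1, h2, h3⟩ := h
  have hb : ∀ a b : ℕ, Nat.beq a b = false → a ≠ b := by
    intro a b h e; subst e; simp at h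
  have ha : ∀ a b, adjB t.edges a b = false → ¬ t.Adj a b := by
    intro a b h e; rw [← adjB_iff, h] at e; exact absurd e (by simp)
  refine ⟨fun v hv => (h1 v hv).1, ?_, fun v hv => hb _ _ (h1 v hv).2.1, ?_,
    fun v hv => (h1 v hv).2.2⟩
  · intro u hu v hv e
    rcases h2 u hu v hv with h | h
    · exact absurd e (hb _ _ h)
    · exact h
  · rintro u v (hu | hu) h4 h5
    · have := h3 u v ⟨hu, h4, h5⟩
      exact ⟨ha _ _ this.1, this.2⟩
    · have := h3 v u ⟨hu, h5, h4⟩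
      exact ⟨fun h => ha _ _ this.1 h.symm, this.2.symm⟩

def gmB (t : RT ℕ) (L : List ℕ) : Bool :=
  let f := fun i => L.getD i 0
  coreB t.edges (t.edges.filter fun _ => decide True && decide True) t.verts t.verts f &&
    (adjB t.edges t.root (f t.root) && nbrB t.edges t.root fun y => dB t.edges 2 y (f y))

theorem gmB_spec {t : RT ℕ} {L : List ℕ} (h : gmB t L = true) :
    GM t (fun i => L.getD i 0) := by
  simp only [gmB, Bool.and_eq_true] at h
  obtain ⟨h1, h2, h3⟩ := h
  obtain ⟨a1, a2, a3, a4, a5⟩ := coreB_spec (P := fun _ => True) h1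
  have h3 := nbrB_spec h3
  exact ⟨a1, a2, a3, fun u v h => a4 u v h trivial trivial, a5, (adjB_iff _ _ _).1 h2,
    fun y hy => (dB_iff _ _ _ _).1 (h3 y hy)⟩

def smB (t : RT ℕ) (L : List ℕ) : Bool :=
  let f := fun i => L.getD i 0
  coreB t.edges (t.edges.filter fun p => decide (p.1 ≠ t.root) && decide (p.2 ≠ t.root))
    t.verts t.verts f &&
    (adjB t.edges t.root (f t.root) && nbrB t.edges t.root fun y => dB t.edges 2 y (f y))

theorem smB_spec {t : RT ℕ} {L : List ℕ} (h : smB t L = true) :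
    SM t (fun i => L.getD i 0) := by
  simp only [smB, Bool.and_eq_true] at h
  obtain ⟨h1, h2, h3⟩ := h
  obtain ⟨a1, a2, a3, a4, a5⟩ := coreB_spec (P := fun i => i ≠ t.root) h1
  have h3 := nbrB_spec h3
  exact ⟨a1, a2, a3, a4, a5, (adjB_iff _ _ _).1 h2,
    fun y hy => (dB_iff _ _ _ _).1 (h3 y hy)⟩

def hmB (j : ℕ) (t : RT ℕ) (L : List ℕ) : Bool :=
  let f := fun i => L.getD i 0
  coreB t.edges (t.edges.filter fun p => decide (p.1 ≠ t.root) && decide (p.2 ≠ t.root))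
    (t.verts.filter fun v => decide (v ≠ t.root)) (t.verts.filter fun v => decide (v ≠ t.root)) f &&
    nbrB t.edges t.root fun y => dB t.edges 2 y (f y) && dB t.edges j t.root (f y)

theorem hmB_spec {j : ℕ} {t : RT ℕ} {L : List ℕ} (h : hmB j t L = true) :
    HM j t (fun i => L.getD i 0) := by
  simp only [hmB, Bool.and_eq_true] at h
  obtain ⟨h1, h3⟩ := h
  obtain ⟨a1, a2, a3, a4, a5⟩ := coreB_spec (P := fun i => i ≠ t.root) h1
  simp only [List.mem_filter, decide_eq_true_eq, and_imp] at a1 a2 a3 a5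
  have h3 := nbrB_spec h3
  simp only [Bool.and_eq_true, dB_iff] at h3
  exact ⟨a1, a2, a3, a4, a5, h3⟩

def fmB (z z' : ℕ) (t : RT ℕ) (L : List ℕ) : Bool :=
  let f := fun i => L.getD i 0
  coreB t.edges (t.edges.filter fun p => decide (p.1 ≠ z') && decide (p.2 ≠ z'))
    (t.verts.filter fun v => decide (v ≠ z')) (t.verts.filter fun v => decide (v ≠ z)) f &&
    ((adjB t.edges t.root (f t.root) &&
      nbrB t.edges t.root fun y => Nat.beq y z' || dB t.edges 2 y (f y)) &&
    (!Nat.beq (f z) z' && (!adjB t.edges (f z) z && dB t.edges 2 (f z) z)))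

theorem fmB_spec {z z' : ℕ} {t : RT ℕ} {L : List ℕ} (h : fmB z z' t L = true) :
    FM t z z' (fun i => L.getD i 0) := by
  simp only [fmB, Bool.and_eq_true, Bool.not_eq_true'] at h
  obtain ⟨h1, ⟨h2, h3⟩, h4, h5, h6⟩ := h
  obtain ⟨a1, a2, a3, a4, a5⟩ := coreB_spec (P := fun i => i ≠ z') h1
  simp only [List.mem_filter, decide_eq_true_eq, and_imp] at a1 a2 a3 a5
  have h3 := nbrB_spec h3
  simp only [Bool.or_eq_true, dB_iff, Nat.beq_eq] at h3
  refine ⟨a1, a2, a3, a4, a5, (adjB_iff _ _ _).1 h2, ?_, ?_, ?_, (dB_iff _ _ _ _).1 h6⟩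
  · intro y hy hz
    exact (h3 y hy).resolve_left hz
  · intro e; rw [e] at h4; simp at h4
  · rw [← adjB_iff, h5]; simp

/-! ### Tables of explicit placements -/

/-- the five star shapes in which no vertex has three leaf children -/
def k1 : RT Unit := leaf ()
def k2 : RT Unit := mk () [k1]
def c2 : RT Unit := mk () [k1, k1]
def p3 : RT Unit := mk () [k2]
def l2 : RT Unit := mk () [c2]
def stars : List (RT Unit) := [k1, k2, c2, p3, l2]

/-- explicit good placements -/
def baseTable : List (RT Unit × List ℕ) := [
  (mk () [mk () [p3]], [1, 3, 0, 4, 2]),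
  (mk () [mk () [p3], k1], [1, 2, 3, 5, 0, 4]),
  (mk () [mk () [p3], k2], [3, 2, 0, 5, 1, 6, 4]),
  (mk () [mk () [p3], c2], [1, 4, 3, 2, 5, 7, 0, 6]),
  (mk () [mk () [p3], p3], [1, 3, 0, 2, 5, 7, 4, 6]),
  (mk () [mk () [p3], l2], [1, 3, 0, 4, 2, 6, 8, 5, 7]),
  (mk () [p3], [1, 3, 0, 2]),
  (mk () [mk () [l2]], [1, 3, 0, 2, 5, 4]),
  (mk () [mk () [l2], k1], [1, 2, 3, 5, 0, 6, 4]),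
  (mk () [mk () [l2], k2], [3, 2, 0, 5, 1, 4, 7, 6]),
  (mk () [mk () [l2], c2], [1, 4, 3, 2, 5, 7, 0, 8, 6]),
  (mk () [mk () [l2], p3], [1, 3, 0, 2, 5, 7, 4, 8, 6]),
  (mk () [mk () [l2], l2], [1, 3, 0, 4, 2, 6, 8, 5, 9, 7]),
  (mk () [l2], [1, 3, 0, 4, 2]),
  (mk () [mk () [k2, k1]], [1, 4, 0, 2, 3]),
  (mk () [mk () [k2, k1], k1], [1, 2, 3, 4, 5, 0]),
  (mk () [k2, k1], [1, 2, 3, 0]),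
  (mk () [mk () [k2, k2]], [1, 3, 0, 4, 5, 2]),
  (mk () [mk () [k2, k2], k1], [1, 2, 3, 0, 5, 6, 4]),
  (mk () [mk () [k2, c2]], [1, 3, 0, 2, 5, 6, 4]),
  (mk () [mk () [k2, c2], k1], [1, 2, 3, 0, 5, 6, 7, 4]),
  (mk () [k2, c2], [1, 4, 3, 2, 5, 0]),
  (mk () [mk () [k2, p3]], [1, 3, 0, 4, 5, 6, 2]),
  (mk () [mk () [k2, p3], k1], [1, 2, 3, 0, 5, 6, 7, 4]),
  (mk () [k2, p3], [1, 3, 4, 2, 5, 0]),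
  (mk () [mk () [k2, l2]], [1, 3, 0, 4, 5, 6, 7, 2]),
  (mk () [mk () [k2, l2], k1], [1, 2, 3, 0, 5, 6, 7, 8, 4]),
  (mk () [k2, l2], [1, 3, 4, 0, 5, 6, 2]),
  (mk () [mk () [c2, k1]], [1, 4, 0, 2, 5, 3]),
  (mk () [mk () [c2, k1], k1], [1, 2, 3, 4, 0, 6, 5]),
  (mk () [c2, k1], [1, 2, 3, 4, 0]),
  (mk () [mk () [c2, k2]], [1, 3, 0, 4, 5, 6, 2]),
  (mk () [mk () [c2, k2], k1], [1, 2, 3, 0, 5, 6, 7, 4]),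
  (mk () [c2, k2], [3, 2, 0, 1, 5, 4]),
  (mk () [mk () [c2, c2]], [1, 3, 0, 2, 5, 4, 7, 6]),
  (mk () [mk () [c2, c2], k1], [1, 2, 3, 0, 5, 6, 7, 8, 4]),
  (mk () [c2, c2], [1, 4, 3, 2, 5, 6, 0]),
  (mk () [mk () [c2, p3]], [1, 3, 0, 4, 5, 6, 7, 2]),
  (mk () [mk () [c2, p3], k1], [1, 2, 3, 0, 5, 6, 7, 8, 4]),
  (mk () [c2, p3], [1, 3, 4, 2, 5, 6, 0]),
  (mk () [mk () [c2, l2]], [1, 3, 0, 4, 5, 6, 7, 8, 2]),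
  (mk () [mk () [c2, l2], k1], [1, 2, 3, 0, 5, 6, 7, 8, 9, 4]),
  (mk () [c2, l2], [1, 3, 4, 0, 5, 6, 7, 2]),
  (mk () [mk () [p3, k1]], [1, 4, 0, 2, 5, 3]),
  (mk () [mk () [p3, k1], k1], [1, 2, 3, 4, 6, 0, 5]),
  (mk () [p3, k1], [1, 2, 4, 0, 3]),
  (mk () [mk () [p3, k2]], [1, 3, 0, 4, 6, 2, 5]),
  (mk () [mk () [p3, k2], k1], [1, 2, 3, 0, 5, 7, 4, 6]),
  (mk () [p3, k2], [3, 2, 0, 5, 1, 4]),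
  (mk () [mk () [p3, c2]], [1, 3, 0, 2, 5, 7, 4, 6]),
  (mk () [mk () [p3, c2], k1], [1, 2, 3, 0, 5, 6, 8, 4, 7]),
  (mk () [p3, c2], [1, 4, 3, 2, 6, 0, 5]),
  (mk () [mk () [p3, p3]], [1, 3, 0, 4, 5, 7, 2, 6]),
  (mk () [mk () [p3, p3], k1], [1, 2, 3, 0, 5, 6, 8, 4, 7]),
  (mk () [p3, p3], [1, 3, 4, 2, 6, 0, 5]),
  (mk () [mk () [p3, l2]], [1, 3, 0, 4, 5, 6, 8, 2, 7]),
  (mk () [mk () [p3, l2], k1], [1, 2, 3, 0, 5, 6, 7, 9, 4, 8]),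
  (mk () [p3, l2], [1, 3, 4, 0, 5, 7, 2, 6]),
  (mk () [mk () [l2, k1]], [1, 4, 0, 2, 3, 6, 5]),
  (mk () [mk () [l2, k1], k1], [1, 2, 3, 4, 5, 0, 7, 6]),
  (mk () [l2, k1], [1, 2, 3, 0, 5, 4]),
  (mk () [mk () [l2, k2]], [1, 3, 0, 4, 5, 2, 7, 6]),
  (mk () [mk () [l2, k2], k1], [1, 2, 3, 0, 5, 6, 4, 8, 7]),
  (mk () [l2, k2], [3, 2, 0, 5, 1, 6, 4]),
  (mk () [mk () [l2, c2]], [1, 3, 0, 2, 5, 6, 4, 8, 7]),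
  (mk () [mk () [l2, c2], k1], [1, 2, 3, 0, 5, 6, 7, 4, 9, 8]),
  (mk () [l2, c2], [1, 4, 3, 2, 5, 0, 7, 6]),
  (mk () [mk () [l2, p3]], [1, 3, 0, 4, 5, 6, 2, 8, 7]),
  (mk () [mk () [l2, p3], k1], [1, 2, 3, 0, 5, 6, 7, 4, 9, 8]),
  (mk () [l2, p3], [1, 3, 4, 2, 5, 0, 7, 6]),
  (mk () [mk () [l2, l2]], [1, 3, 0, 4, 5, 6, 7, 2, 9, 8]),
  (mk () [mk () [l2, l2], k1], [1, 2, 3, 0, 5, 6, 7, 8, 4, 10, 9]),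
  (mk () [l2, l2], [1, 3, 4, 0, 5, 6, 2, 8, 7]),
  (mk () [k2, k1, k1], [1, 2, 3, 4, 0]),
  (mk () [k2, k1, k2], [3, 2, 0, 4, 5, 1]),
  (mk () [k2, k1, c2], [1, 4, 3, 2, 5, 6, 0]),
  (mk () [k2, k2, k1], [1, 2, 3, 4, 5, 0]),
  (mk () [k2, k2, k2], [1, 3, 5, 4, 0, 6, 2]),
  (mk () [k2, k2, c2], [1, 4, 3, 2, 5, 6, 7, 0]),
  (mk () [k2, c2, k1], [1, 2, 3, 0, 5, 6, 4]),
  (mk () [k2, c2, k2], [1, 3, 6, 4, 0, 2, 7, 5]),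
  (mk () [k2, c2, c2], [1, 4, 3, 2, 5, 0, 7, 8, 6]),
  (mk () [c2, k1, k1], [1, 2, 3, 4, 5, 0]),
  (mk () [c2, k1, k2], [1, 3, 5, 4, 6, 0, 2]),
  (mk () [c2, k1, c2], [1, 4, 3, 2, 5, 6, 7, 0]),
  (mk () [c2, k2, k1], [1, 2, 3, 4, 5, 6, 0]),
  (mk () [c2, k2, k2], [1, 3, 5, 4, 0, 6, 7, 2]),
  (mk () [c2, k2, c2], [1, 4, 3, 2, 5, 6, 7, 8, 0]),
  (mk () [c2, c2, k1], [1, 2, 3, 0, 5, 6, 7, 4]),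
  (mk () [c2, c2, k2], [1, 3, 6, 4, 0, 2, 7, 8, 5]),
  (mk () [c2, c2, c2], [1, 4, 3, 2, 5, 0, 7, 8, 9, 6]),
  (mk () [k2, k2, k2, k2], [1, 3, 5, 4, 0, 6, 7, 8, 2]),
  (mk () [mk () [k1, k1, k1], k2], [3, 2, 0, 1, 5, 6, 4])]

theorem baseTable_ok : (baseTable.all fun p => gmB (p.1.num 0) p.2) = true := by decide +kernel

/-- explicit placements of pairs of stars -/
def hangTable : List (RT Unit × List ℕ) := [
  (c2, [0, 2, 1]),
  (mk () [k1, k2], [0, 2, 3, 1]),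
  (mk () [k1, c2], [0, 2, 3, 4, 1]),
  (mk () [k1, p3], [0, 3, 4, 2, 1]),
  (mk () [k1, l2], [0, 2, 5, 4, 3, 1]),
  (mk () [k2, k1], [0, 2, 3, 1]),
  (mk () [k2, k2], [0, 2, 3, 4, 1]),
  (mk () [k2, c2], [0, 2, 3, 4, 5, 1]),
  (mk () [k2, p3], [0, 3, 1, 4, 5, 2]),
  (mk () [k2, l2], [0, 2, 5, 4, 3, 6, 1]),
  (mk () [c2, k1], [0, 2, 1, 4, 3]),
  (mk () [c2, k2], [0, 2, 3, 1, 5, 4]),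
  (mk () [c2, c2], [0, 2, 3, 4, 1, 6, 5]),
  (mk () [c2, p3], [0, 3, 1, 4, 5, 6, 2]),
  (mk () [c2, l2], [0, 2, 5, 4, 3, 1, 7, 6]),
  (mk () [p3, k1], [0, 2, 4, 1, 3]),
  (mk () [p3, k2], [0, 2, 3, 5, 1, 4]),
  (mk () [p3, c2], [0, 2, 3, 4, 6, 1, 5]),
  (mk () [p3, p3], [0, 3, 1, 4, 6, 2, 5]),
  (mk () [p3, l2], [0, 2, 5, 4, 3, 7, 1, 6]),
  (mk () [l2, k1], [0, 2, 3, 1, 5, 4]),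
  (mk () [l2, k2], [0, 2, 3, 4, 1, 6, 5]),
  (mk () [l2, c2], [0, 2, 3, 4, 5, 1, 7, 6]),
  (mk () [l2, p3], [0, 3, 1, 4, 5, 2, 7, 6]),
  (mk () [l2, l2], [0, 2, 5, 4, 3, 6, 1, 8, 7]),
  (mk () [mk () [k2, k2]], [0, 3, 4, 2, 5, 1])]

theorem hangTable_ok : (hangTable.all fun p => hmB 3 (p.1.num 0) p.2) = true := by decide +kernel

theorem hang1_ok : hmB 1 ((mk () [k1, k1]).num 0) [0, 2, 1] = true := by decide +kernel

theorem semi_ok : smB ((mk () [k2, k2]).num 0) [1, 2, 3, 4, 0] = true := by decide +kernel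

theorem fm1_ok : fmB 2 3 ((mk () [p3]).num 0) [1, 3, 0, 0] = true := by decide +kernel

theorem fm2_ok : fmB 3 4 ((mk () [mk () [k2, k1]]).num 0) [1, 4, 0, 2, 0] = true := by decide +kernel

theorem fm3_ok : fmB 3 4 ((mk () [p3, k1]).num 0) [1, 2, 4, 0, 0] = true := by decide +kernel

theorem fm4_ok : fmB 5 6 ((mk () [mk () [k2, k1], k2]).num 0) [3, 2, 0, 1, 6, 4, 0] = true := by decide +kernel

theorem good_of_shape {t : RT V} (h : t.verts.Nodup)
    (hs : t.shape ∈ baseTable.map Prod.fst) : Good t := by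
  obtain ⟨p, hp, hps⟩ := List.mem_map.1 hs
  have h1 := gmB_spec (List.all_eq_true.1 baseTable_ok p hp)
  obtain ⟨e, he, hi⟩ := exists_label t p.1 hps.symm h
  rw [← he]
  exact GM.good_map hi h1

theorem hang_of_shape {t : RT V} (h : t.verts.Nodup)
    (hs : t.shape ∈ hangTable.map Prod.fst) : Hang 3 t := by
  obtain ⟨p, hp, hps⟩ := List.mem_map.1 hs
  have h1 := hmB_spec (List.all_eq_true.1 hangTable_ok p hp)
  obtain ⟨e, he, hi⟩ := exists_label t p.1 hps.symm h
  rw [← he]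
  exact HM.hang_map hi h1

theorem hang1_of_shape {t : RT V} (h : t.verts.Nodup)
    (hs : t.shape = mk () [k1, k1]) : Hang 1 t := by
  obtain ⟨e, he, hi⟩ := exists_label t _ hs h
  rw [← he]
  exact HM.hang_map hi (hmB_spec hang1_ok)

theorem semi_of_shape {t : RT V} (h : t.verts.Nodup)
    (hs : t.shape = mk () [k2, k2]) : Semi t := by
  obtain ⟨e, he, hi⟩ := exists_label t _ hs h
  rw [← he]
  exact SM.semi_map hi (smB_spec semi_ok)

/-! ### Reductions -/

theorem Eqv.symm {t t' : RT V} (h : Eqv t t') : Eqv t' t :=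
  ⟨h.root.symm, h.verts.symm, fun u v => (h.adj u v).symm⟩

theorem Eqv.nodup {t t' : RT V} (h : Eqv t t') (h1 : t.verts.Nodup) : t'.verts.Nodup :=
  h.verts.nodup_iff.1 h1

theorem eqv_perm {x : V} {l l' : List (RT V)} (h : l.Perm l') : Eqv (mk x l) (mk x l') := by
  refine ⟨by simp, ?_, ?_⟩
  · refine (verts_mk x l).trans (List.Perm.trans ?_ (verts_mk x l').symm)
    exact (h.flatMap_right _).cons x
  · intro u v
    simp only [adj_mk, h.mem_iff]

theorem eqv_cons {x : V} {b b' : RT V} {l : List (RT V)} (h : Eqv b b') :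
    Eqv (mk x (b :: l)) (mk x (b' :: l)) := by
  refine ⟨by simp, ?_, ?_⟩
  · simp only [mk, verts]
    exact h.verts.append_left _
  · intro u v
    simp only [mk, adj_join, h.adj, h.root]

theorem nd_mk {x : V} {l : List (RT V)} : (mk x l).verts.Nodup ↔
    (∀ b ∈ l, x ∉ b.verts) ∧ (∀ b ∈ l, b.verts.Nodup) ∧
      l.Pairwise (fun a b => ∀ v, v ∈ a.verts → v ∉ b.verts) := by
  rw [(verts_mk x l).nodup_iff, List.nodup_cons, List.nodup_flatMap]
  simp only [List.mem_flatMap, not_exists, not_and]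
  rfl

theorem nd_append {x : V} {hs l : List (RT V)} (h : (mk x (hs ++ l)).verts.Nodup) :
    (mk x hs).verts.Nodup ∧ (mk x l).verts.Nodup ∧
    (∀ v, v ∈ (mk x l).verts → v ∈ (mk x hs).verts → v = x) := by
  rw [nd_mk] at h
  simp only [List.mem_append, List.pairwise_append] at h
  obtain ⟨h1, h2, h3, h4, h5⟩ := h
  refine ⟨?_, ?_, ?_⟩
  · rw [nd_mk]; exact ⟨fun b hb => h1 b (Or.inl hb), fun b hb => h2 b (Or.inl hb), h3⟩
  · rw [nd_mk]; exact ⟨fun b hb => h1 b (Or.inr hb), fun b hb => h2 b (Or.inr hb), h4⟩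
  · intro v hv hw
    rw [mem_mk] at hv hw
    rcases hv with hv | ⟨b, hb, hv⟩
    · exact hv
    · rcases hw with hw | ⟨c, hc, hw⟩
      · exact hw
      · exact absurd hv (h5 c hc b hb v hw)

theorem adj_mk_append {y a b : V} {hs m : List (RT V)} :
    (mk y (hs ++ m)).Adj a b ↔ (mk y m).Adj a b ∨ (mk y hs).Adj a b := by
  simp only [adj_mk, List.mem_append, or_and_right, exists_or]
  grind

theorem red_root {x : V} {hs l : List (RT V)} (hn : (mk x (hs ++ l)).verts.Nodup)
    (hg : Good (mk x l)) (hh : Hang 3 (mk x hs)) : Good (mk x (hs ++ l)) := by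
  obtain ⟨f, hf⟩ := hg
  obtain ⟨g, hg⟩ := hh
  obtain ⟨n1, n2, n3⟩ := nd_append hn
  have hr := hf.root
  rw [root_mk] at hr
  refine glue (u := x) (i := 2) (j := 3) hf hr.left ((D.of_adj hr).mono (by decide)) (by decide)
    hg (by simp) (fun a b => adj_irrefl n1) n3 ?_ ?_ (by simp)
  · intro v
    simp only [mem_mk, List.mem_append, or_and_right, exists_or]
    grind
  · intro a b
    simp only [adj_mk, List.mem_append, or_and_right, exists_or]
    grind

theorem red_y {x y : V} {hs m l : List (RT V)} (hn : (mk x (mk y (hs ++ m) :: l)).verts.Nodup)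
    (hg : Good (mk x (mk y m :: l))) (hh : Hang 3 (mk y hs)) :
    Good (mk x (mk y (hs ++ m) :: l)) := by
  obtain ⟨f, hf⟩ := hg
  obtain ⟨g, hg⟩ := hh
  have h1 := nd_mk.1 hn
  simp only [List.mem_cons, forall_eq_or_imp, List.pairwise_cons] at h1
  obtain ⟨⟨h1, h2⟩, ⟨h3, h4⟩, h5, h6⟩ := h1
  obtain ⟨n1, n2, n3⟩ := nd_append h3
  have hsub : ∀ v, v ∈ (mk y hs).verts → v ∈ (mk y (hs ++ m)).verts := by
    intro v
    simp only [mem_mk, List.mem_append]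
    grind
  have hy : (mk x (mk y m :: l)).Adj x y := by
    rw [mk, adj_join]; simp
  refine glue (u := y) (i := 2) (j := 3) hf hy.right (hf.nbr y (by simpa using hy)) (by decide)
    hg (by simp) (fun a b => adj_irrefl n1) ?_ ?_ ?_ (by simp)
  · intro v hv hw
    rw [mem_mk] at hv
    rcases hv with hv | ⟨b, hb, hv⟩
    · subst hv
      exact absurd (hsub _ hw) h1
    · rw [List.mem_cons] at hb
      rcases hb with hb | hb
      · subst hb; exact n3 v hv hw
      · exact absurd hv (h5 b hb v (hsub v hw))
  · intro v
    simp only [mk, verts, List.mem_append, mem_mk, or_and_right, exists_or]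
    grind
  · intro a b
    simp only [mk, adj_join, adj_mk_append, root_mk]
    tauto

theorem hang_of_good {u : V} {b : RT V} (hn : (mk u [b]).verts.Nodup) (h : Good b) :
    Hang 3 (mk u [b]) := by
  obtain ⟨f, h⟩ := h
  simp only [nd_mk, List.mem_singleton, forall_eq] at hn
  obtain ⟨hu, -, -⟩ := hn
  have hv : ∀ v, v ∈ (mk u [b]).verts ↔ v = u ∨ v ∈ b.verts := by simp [mem_mk]
  have hv' : ∀ v, v ∈ (mk u [b]).verts → v ≠ u → v ∈ b.verts :=
    fun v h h1 => ((hv v).1 h).resolve_left h1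
  have ha : ∀ a c, (mk u [b]).Adj a c ↔ b.Adj a c ∨ (a = u ∧ c = b.root) ∨
      (c = u ∧ a = b.root) := by simp [adj_mk]
  have hD : ∀ {k a c}, b.D k a c → (mk u [b]).D k a c :=
    fun h => D.sub (fun a c h => (ha a c).2 (Or.inl h)) h
  have hne : ∀ v ∈ b.verts, v ≠ u := fun v h e => hu (e ▸ h)
  have hA : ∀ a c, (mk u [b]).Adj a c → a ≠ u → c ≠ u → b.Adj a c := by
    intro a c h h1 h2
    rw [ha] at h
    rcases h with h | h | h
    · exact h
    · exact absurd h.1 h1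
    · exact absurd h.1 h2
  refine ⟨f, ?_, ?_, ?_, ?_, ?_, ?_⟩ <;> simp only [root_mk]
  · intro v h1 h2
    have h3 := h.maps v (hv' v h1 h2)
    exact ⟨(hv _).2 (Or.inr h3), hne _ h3⟩
  · intro a h1 h2 c h3 h4
    exact h.inj a (hv' a h1 h2) c (hv' c h3 h4)
  · intro v h1 h2
    exact h.ne v (hv' v h1 h2)
  · intro a c h1 h2 h3
    have h4 := hA a c h1 h2 h3
    have h5 := h.edge a c h4
    refine ⟨fun h6 => h5.1 (hA _ _ h6 (hne _ (h.maps _ h4.left)) (hne _ (h.maps _ h4.right))),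
      hD h5.2⟩
  · intro v h1 h2
    exact hD (h.all4 v (hv' v h1 h2))
  · intro y hy
    have hyr : y = b.root := by
      rw [ha] at hy
      rcases hy with h1 | h1 | h1
      · exact absurd h1.left hu
      · exact h1.2
      · exact absurd (h1.2 ▸ b.root_mem) hu
    have h1 : b.D 1 y (f y) := by rw [hyr]; exact D.of_adj h.root
    exact ⟨hD (h1.mono (by decide)), (D.trans (hD h1) (D.of_adj hy)).mono (by decide)⟩

/-! shapes -/

theorem kids_map (e : V → W) (t : RT V) : (t.map e).kids = t.kids.map (map e) := by
  induction t with
  | leaf v => rfl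
  | join a b iha _ => simp only [map, kids, iha, List.map_cons]

theorem shape_mk (x : V) (l : List (RT V)) : (mk x l).shape = mk () (l.map shape) := by
  induction l with
  | nil => rfl
  | cons b l ih =>
    simp only [shape] at ih
    simp only [shape, mk, map, ih, List.map_cons]

theorem mk_inj {l l' : List (RT V)} {x : V} : mk x l = mk x l' ↔ l = l' :=
  ⟨fun h => by simpa using congrArg kids h, fun h => by rw [h]⟩

def L (b : RT V) : Prop := b.shape = k1
def K (b : RT V) : Prop := b.shape = k2

theorem L_mk {x : V} {l : List (RT V)} : L (mk x l) ↔ l = [] := by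
  rw [L, shape_mk, show k1 = mk () [] from rfl, mk_inj, List.map_eq_nil_iff]

theorem K_mk {x : V} {l : List (RT V)} : K (mk x l) ↔ ∃ c, l = [c] ∧ L c := by
  rw [K, shape_mk, show k2 = mk () [k1] from rfl, mk_inj, List.map_eq_singleton_iff]
  rfl

theorem L.eq {b : RT V} (h : L b) : ∃ v, b = leaf v := by
  obtain ⟨x, l, rfl⟩ := exists_mk b
  rw [L_mk] at h; subst h; exact ⟨x, rfl⟩

theorem K.eq {b : RT V} (h : K b) : ∃ v w, b = mk v [leaf w] := by
  obtain ⟨x, l, rfl⟩ := exists_mk b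
  obtain ⟨c, rfl, hc⟩ := K_mk.1 h
  obtain ⟨w, rfl⟩ := hc.eq
  exact ⟨x, w, rfl⟩

theorem K.not_L {b : RT V} (h : K b) : ¬ L b := by
  rw [K] at h; rw [L, h]; decide

def CStar (t : RT V) : Prop := ∀ b ∈ t.kids, L b
def Star (t : RT V) : Prop := CStar t ∨ (t.kids.length = 1 ∧ ∀ b ∈ t.kids, CStar b)
def Bad (t : RT V) : Prop := t.kids.length = 2 ∧ ∀ b ∈ t.kids, K b
def Ok (t : RT V) : Prop := ¬ Star t ∧ ¬ Bad t

theorem L.cstar {b : RT V} (h : L b) : CStar b := by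
  obtain ⟨v, rfl⟩ := h.eq
  intro c hc; simp [kids] at hc

theorem K.cstar {b : RT V} (h : K b) : CStar b := by
  obtain ⟨v, w, rfl⟩ := h.eq
  intro c hc; simp at hc; subst hc; rfl

theorem ok_of_nonstar {x : V} {l : List (RT V)} {b : RT V} (hb : b ∈ l) (h : ¬ Star b) :
    Ok (mk x l) := by
  constructor
  · rintro (h1 | h1)
    · exact h (Or.inl (h1 b (by simpa)).cstar)
    · exact h (Or.inl (h1.2 b (by simpa)))
  · intro h1
    exact h (Or.inl (h1.2 b (by simpa)).cstar)

theorem ok_of_three {x : V} {l : List (RT V)} {b : RT V} (hb : b ∈ l) (h : ¬ L b)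
    (hl : 3 ≤ l.length) : Ok (mk x l) := by
  constructor
  · rintro (h1 | h1)
    · exact h (h1 b (by simpa))
    · have := h1.1; rw [kids_mk] at this; omega
  · intro h1
    have := h1.1; rw [kids_mk] at this; omega

theorem ok_of_two {x : V} {l : List (RT V)} {b c : RT V} (hb : b ∈ l) (h : ¬ L b)
    (hc : c ∈ l) (h' : ¬ K c) (hl : 2 ≤ l.length) : Ok (mk x l) := by
  constructor
  · rintro (h1 | h1)
    · exact h (h1 b (by simpa))
    · have := h1.1; rw [kids_mk] at this; omega
  · intro h1
    exact h' (h1.2 c (by simpa))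

theorem ok_of_one {x : V} {b : RT V} (h : ¬ CStar b) : Ok (mk x [b]) := by
  constructor
  · rintro (h1 | h1)
    · exact h (h1 b (by simp)).cstar
    · exact h (h1.2 b (by simp))
  · intro h1
    have := h1.1; simp at this

theorem not_cstar {x : V} {l : List (RT V)} {b : RT V} (hb : b ∈ l) (h : ¬ L b) :
    ¬ CStar (mk x l) := fun h1 => h (h1 b (by simpa))

theorem not_L {x : V} {l : List (RT V)} {b : RT V} (hb : b ∈ l) : ¬ L (mk x l) := by
  rw [L_mk]; rintro rfl; simp at hb

theorem not_K_of_L {b : RT V} (h : L b) : ¬ K b := fun h1 => h1.not_L h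

/-! removing two leaves -/

inductive Red : RT V → RT V → Prop
  | base (x p q r : V) (l l' : List (RT V))
      (h : l.Perm (leaf p :: leaf q :: leaf r :: l')) : Red (mk x l) (mk x (leaf r :: l'))
  | ctx (x : V) (b b' : RT V) (l l' : List (RT V)) (h : l.Perm (b :: l')) (hb : Red b b') :
      Red (mk x l) (mk x (b' :: l'))

theorem Red.spec {t t' : RT V} (h : Red t t') : t.root = t'.root ∧ ∃ u p q, u ∈ t'.verts ∧
    t.verts.Perm (p :: q :: t'.verts) ∧
    ∀ a b, t.Adj a b ↔ t'.Adj a b ∨ (mk u [leaf p, leaf q]).Adj a b := by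
  induction h with
  | base x p q r l l' h =>
    refine ⟨by simp, x, p, q, by simp [mem_mk], ?_, ?_⟩
    · refine (eqv_perm h).verts.trans ?_
      simp only [mk, verts]
      simp only [List.append_assoc, List.cons_append, List.nil_append]
      classical
      exact List.perm_iff_count.2 (fun a => by simp [List.count_append, List.count_cons]; omega)
    · intro a b
      rw [(eqv_perm h).adj]
      simp only [adj_mk, List.mem_cons, exists_eq_or_imp, adj_leaf, root]
      generalize (∃ b_1 ∈ l', b_1.Adj a b) = p1, (∃ b_1 ∈ l', b = b_1.root) = p2,
        (∃ b ∈ l', a = b.root) = p3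
      simp
      grind
  | ctx x b b' l l' h hb ih =>
    obtain ⟨hr, u, p, q, hu, hv, ha⟩ := ih
    refine ⟨by simp, u, p, q, by simp [mk, verts, hu], ?_, ?_⟩
    · refine (eqv_perm h).verts.trans ?_
      simp only [mk, verts]
      refine (hv.append_left _).trans ?_
      classical
      exact List.perm_iff_count.2 (fun a => by simp [List.count_append, List.count_cons]; omega)
    · intro c d
      rw [(eqv_perm h).adj]
      conv_lhs => rw [mk, adj_join, ha, hr]
      conv_rhs => lhs; rw [mk, adj_join]
      grind

theorem Red.good {t t' : RT V} (h : Red t t') (hn : t.verts.Nodup) : t'.verts.Nodup ∧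
    t'.verts.length < t.verts.length ∧ (Good t' → Good t) := by
  obtain ⟨hr, u, p, q, hu, hv, ha⟩ := h.spec
  have hn' := hv.nodup_iff.1 hn
  simp only [List.nodup_cons, List.mem_cons, not_or] at hn'
  obtain ⟨⟨hpq, hp⟩, hq, hn''⟩ := hn'
  refine ⟨hn'', ?_, ?_⟩
  · rw [hv.length_eq]; simp
  · rintro ⟨f, hf⟩
    have hup : p ≠ u := fun h => hp (h ▸ hu)
    have huq : q ≠ u := fun h => hq (h ▸ hu)
    have nw : (mk u [leaf p, leaf q]).verts.Nodup := by
      simp [mk, verts]; exact ⟨⟨huq.symm, hup.symm⟩, Ne.symm hpq⟩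
    obtain ⟨g, hg⟩ := hang1_of_shape nw rfl
    refine glue hf hu (hf.all4 u hu) (by decide) hg (by simp) (fun a b => adj_irrefl nw) ?_ ?_ ha hr
    · intro v hv hw
      simp only [mk, verts, List.mem_append, List.mem_singleton] at hw
      rcases hw with (hw | hw) | hw
      · exact hw
      · exact absurd (hw ▸ hv) hq
      · exact absurd (hw ▸ hv) hp
    · intro v
      rw [hv.mem_iff]
      simp only [mk, verts, List.mem_append, List.mem_singleton, List.mem_cons]
      grind

def Irr (t : RT V) : Prop := ∀ t', ¬ Red t t'

theorem Irr.kid {x : V} {l : List (RT V)} {b : RT V} (h : Irr (mk x l)) (hb : b ∈ l) : Irr b := by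
  intro b' hb'
  obtain ⟨l1, l2, rfl⟩ := List.append_of_mem hb
  exact h _ (Red.ctx x b b' _ (l1 ++ l2) List.perm_middle hb')

theorem Red.not_L {t t' : RT V} (h : Red t t') : ¬ L t' := by
  cases h <;> simp [L_mk]

theorem Red.cstar {t t' : RT V} (h : Red t t') (hs : CStar t') : CStar t := by
  cases h with
  | base x p q r l l' h =>
    intro b hb
    rw [kids_mk, h.mem_iff] at hb
    simp only [List.mem_cons] at hb
    rcases hb with rfl | rfl | rfl | hb
    · rfl
    · rfl
    · rfl
    · exact hs b (by simp [hb])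
  | ctx x b b' l l' h hb => exact absurd (hs b' (by simp)) hb.not_L

theorem Red.star {t t' : RT V} (h : Red t t') (hs : Star t') : Star t := by
  rcases hs with hs | hs
  · exact Or.inl (h.cstar hs)
  · cases h with
    | base x p q r l l' h =>
      left
      have hl : l' = [] := by simpa using hs.1
      subst hl
      intro b hb
      rw [kids_mk, h.mem_iff] at hb
      simp only [List.mem_cons, List.not_mem_nil, or_false] at hb
      rcases hb with rfl | rfl | rfl <;> rfl
    | ctx x b b' l l' h hb =>
      right
      have hl : l' = [] := by simpa using hs.1
      subst hl
      rw [List.perm_singleton] at h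
      subst h
      refine ⟨by simp, ?_⟩
      simp only [kids_mk, List.mem_singleton, forall_eq]
      exact hb.cstar (hs.2 b' (by simp))

theorem Red.K {t t' : RT V} (h : Red t t') (hs : K t') : t.shape = mk () [k1, k1, k1] := by
  cases h with
  | base x p q r l l' h =>
    obtain ⟨c, h1, -⟩ := K_mk.1 hs
    have hl : l' = [] := by simpa using congrArg List.tail h1
    subst hl
    rw [shape_mk, mk_inj]
    have := h.map shape
    have e : [leaf p, leaf q, leaf r].map shape = List.replicate 3 k1 := rfl
    rw [e, List.perm_replicate] at this
    exact this
  | ctx x b b' l l' h hb =>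
    obtain ⟨c, h1, h2⟩ := K_mk.1 hs
    have : b' = c := by simpa using congrArg List.head? h1
    exact absurd (this ▸ h2) hb.not_L

theorem Red.bad {t t' : RT V} (h : Red t t') (hn : t.verts.Nodup) (hs : Bad t') : Good t := by
  cases h with
  | base x p q r l l' h =>
    exact absurd (hs.2 (leaf r) (by simp)) (show ¬ (leaf () : RT Unit) = k2 by decide)
  | ctx x b b' l l' h hb =>
    have e := eqv_perm (x := x) h
    refine Good.eqv ?_ e.symm
    refine good_of_shape (e.nodup hn) ?_
    have hl : l'.length = 1 := by simpa using hs.1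
    obtain ⟨c, rfl⟩ := List.length_eq_one_iff.1 hl
    have h1 : c.shape = k2 := hs.2 c (by simp)
    have h2 := hb.K (hs.2 b' (by simp))
    rw [shape_mk, List.map_cons, List.map_cons, List.map_nil, h1, h2]
    decide

theorem Irr.cstar_shape {t : RT V} (h : Irr t) (hs : CStar t) : t.shape ∈ [k1, k2, c2] := by
  obtain ⟨x, l, rfl⟩ := exists_mk t
  match l, h, hs with
  | [], _, _ => simp [shape_mk]; left; rfl
  | [a], _, hs =>
    have h1 : a.shape = k1 := hs a (by simp)
    simp only [shape_mk, List.map_cons, List.map_nil, h1]; decide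
  | [a, b], _, hs =>
    have h1 : a.shape = k1 := hs a (by simp)
    have h2 : b.shape = k1 := hs b (by simp)
    simp only [shape_mk, List.map_cons, List.map_nil, h1, h2]; decide
  | a :: b :: c :: l, h, hs =>
    obtain ⟨p, rfl⟩ := (hs a (by simp)).eq
    obtain ⟨q, rfl⟩ := (hs b (by simp)).eq
    obtain ⟨r, rfl⟩ := (hs c (by simp)).eq
    exact absurd (Red.base x p q r _ l (List.Perm.refl _)) (h _)

theorem Irr.star_shape {t : RT V} (h : Irr t) (hs : Star t) : t.shape ∈ stars := by
  rcases hs with hs | ⟨h1, h2⟩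
  · have := h.cstar_shape hs
    simp only [List.mem_cons, List.not_mem_nil, or_false] at this
    rcases this with h | h | h <;> rw [h] <;> decide
  · obtain ⟨x, l, rfl⟩ := exists_mk t
    rw [kids_mk] at h1 h2
    obtain ⟨b, rfl⟩ := List.length_eq_one_iff.1 h1
    have := (h.kid (b := b) (by simp)).cstar_shape (h2 b (by simp))
    simp only [List.mem_cons, List.not_mem_nil, or_false] at this
    rw [shape_mk, List.map_cons, List.map_nil]
    rcases this with h | h | h <;> rw [h] <;> decide

/-- star but not a centred star -/
theorem Irr.star_shape' {t : RT V} (h : Irr t) (hs : Star t) (hc : ¬ CStar t) :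
    t.shape = p3 ∨ t.shape = l2 := by
  rcases hs with hs | ⟨h1, h2⟩
  · exact absurd hs hc
  · obtain ⟨x, l, rfl⟩ := exists_mk t
    rw [kids_mk] at h1 h2
    obtain ⟨b, rfl⟩ := List.length_eq_one_iff.1 h1
    have := (h.kid (b := b) (by simp)).cstar_shape (h2 b (by simp))
    simp only [List.mem_cons, List.not_mem_nil, or_false] at this
    rw [shape_mk, List.map_cons, List.map_nil]
    rcases this with h | h | h
    · exact absurd (fun c hc => by simp at hc; subst hc; exact h) hc
    · rw [h]; left; rfl
    · rw [h]; right; rfl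

/-! ### Grafting a semi-placed tree -/

theorem graft_tree {x y : V} {C : RT V} {ms rest : List (RT V)} {z' : V} {f : V → V}
    (hn : (mk x (mk y (C :: ms) :: rest)).verts.Nodup) (hf : SM C f) (hz' : f C.root = z')
    (hg : (mk x (mk y (mk C.root [leaf z'] :: ms) :: rest)).verts.Nodup →
      ∃ g, FM (mk x (mk y (mk C.root [leaf z'] :: ms) :: rest)) C.root z' g) :
    Good (mk x (mk y (C :: ms) :: rest)) := by
  have hzC : C.root ∈ C.verts := C.root_mem
  have hz'C : z' ∈ C.verts := hz' ▸ hf.maps _ hzC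
  have hn0 := hn
  simp only [mk, verts, List.nodup_append, List.mem_append] at hn
  obtain ⟨h1, ⟨h2, h3, h4⟩, h5⟩ := hn
  have hirrc : ∀ a b, C.Adj a b → a ≠ b := fun a b => adj_irrefl h3
  have hzz : C.root ≠ z' := by
    have := hirrc _ _ hf.root
    rwa [hz'] at this
  have hsn : (mk x (mk y (mk C.root [leaf z'] :: ms) :: rest)).verts.Nodup := by
    simp only [mk, verts, List.nodup_append, List.mem_append, List.mem_singleton]
    refine ⟨h1, ⟨h2, ⟨by simp, by simp, ?_⟩, ?_⟩, ?_⟩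
    · rintro a rfl b rfl; exact hzz
    · rintro a ha b (rfl | rfl)
      · exact h4 a ha _ hzC
      · exact h4 a ha _ hz'C
    · rintro a ha b (hb | rfl | rfl)
      · exact h5 a ha b (Or.inl hb)
      · exact h5 a ha _ (Or.inr hzC)
      · exact h5 a ha _ (Or.inr hz'C)
  obtain ⟨g, hg⟩ := hg hsn
  have hx : x ∈ (mk x rest).verts := by simp [mem_mk]
  refine graft rfl hz' hf hg (by simp) ?_ ?_ (fun a b => adj_irrefl hsn) hirrc ?_ ?_ ?_ ?_ ?_ ?_
  · rw [root_mk]; exact h5 x hx _ (Or.inr hzC)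
  · rw [root_mk]; exact h5 x hx _ (Or.inr hz'C)
  · simp [mk, verts]
  · intro v hv hc
    simp only [mk, verts, List.mem_append, List.mem_singleton] at hv
    rcases hv with hv | hv | hv
    · exact absurd rfl (h5 v hv v (Or.inr hc))
    · exact absurd rfl (h4 v hv v hc)
    · exact hv
  · intro v
    simp only [mk, verts, List.mem_append, List.mem_singleton]
    constructor
    · rintro (hv | hv | hv)
      · exact Or.inl ⟨Or.inl hv, h5 v hv _ (Or.inr hz'C)⟩
      · exact Or.inl ⟨Or.inr (Or.inl hv), h4 v hv _ hz'C⟩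
      · exact Or.inr hv
    · rintro (⟨hv | hv | rfl | hv, h⟩ | hv)
      · exact Or.inl hv
      · exact Or.inr (Or.inl hv)
      · exact Or.inr (Or.inr hzC)
      · exact absurd hv h
      · exact Or.inr (Or.inr hv)
  · intro a b
    have hr := hf.root
    rw [hz'] at hr
    simp only [mk, adj_join, root_mk, root, adj_leaf, false_or]
    rintro (h | (h | (⟨rfl, rfl⟩ | ⟨rfl, rfl⟩) | h) | h)
    · exact Or.inl h
    · exact Or.inr (Or.inl (Or.inl h))
    · exact Or.inr (Or.inl (Or.inr (Or.inl hr)))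
    · exact Or.inr (Or.inl (Or.inr (Or.inl hr.symm)))
    · exact Or.inr (Or.inl (Or.inr (Or.inr h)))
    · exact Or.inr (Or.inr h)
  · intro a b h
    simp only [mk, adj_join]
    exact Or.inr (Or.inl (Or.inr (Or.inl h)))
  · intro a b
    have hy : y ∈ (mk y ms).verts := by simp [mem_mk]
    have n1 : ∀ v ∈ (mk x rest).verts, v ≠ z' := fun v hv => h5 v hv _ (Or.inr hz'C)
    have n2 : ∀ v ∈ (mk y ms).verts, v ≠ z' := fun v hv => h4 v hv _ hz'C
    simp only [mk, adj_join, root_mk, root, adj_leaf, false_or]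
    rintro (h | (h | h | ⟨rfl, rfl⟩ | ⟨rfl, rfl⟩) | ⟨rfl, rfl⟩ | ⟨rfl, rfl⟩)
    · exact Or.inr ⟨Or.inl h, n1 _ h.left, n1 _ h.right⟩
    · exact Or.inr ⟨Or.inr (Or.inl (Or.inl h)), n2 _ h.left, n2 _ h.right⟩
    · exact Or.inl h
    · exact Or.inr ⟨Or.inr (Or.inl (Or.inr (Or.inr (Or.inl ⟨rfl, rfl⟩)))), n2 _ hy, hzz⟩
    · exact Or.inr ⟨Or.inr (Or.inl (Or.inr (Or.inr (Or.inr ⟨rfl, rfl⟩)))), hzz, n2 _ hy⟩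
    · exact Or.inr ⟨Or.inr (Or.inr (Or.inl ⟨rfl, rfl⟩)), n1 _ hx, n2 _ hy⟩
    · exact Or.inr ⟨Or.inr (Or.inr (Or.inr ⟨rfl, rfl⟩)), n2 _ hy, n1 _ hx⟩

theorem graft1 {x y : V} {C : RT V} (hn : (mk x [mk y [C]]).verts.Nodup) (hC : Semi C) :
    Good (mk x [mk y [C]]) := by
  obtain ⟨f, hf⟩ := hC
  refine graft_tree hn hf rfl fun hs => ?_
  obtain ⟨e, he, hi⟩ := exists_label _ (mk () [p3]) rfl hs
  obtain ⟨F, hF⟩ := FM.map hi (by decide) (by decide) (by decide) (fmB_spec fm1_ok)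
  rw [he] at hF
  simp only [p3, k2, k1, mk, num, map, verts, join.injEq, leaf.injEq] at he
  have e1 : e 2 = C.root := he.2.2.1
  have e2 : e 3 = f C.root := he.2.2.2
  rw [e1, e2] at hF
  exact ⟨F, hF⟩

theorem graft2 {x y w : V} {C : RT V} (hn : (mk x [mk y [C, leaf w]]).verts.Nodup)
    (hC : Semi C) : Good (mk x [mk y [C, leaf w]]) := by
  obtain ⟨f, hf⟩ := hC
  refine graft_tree hn hf rfl fun hs => ?_
  obtain ⟨e, he, hi⟩ := exists_label _ (mk () [mk () [k2, k1]]) rfl hs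
  obtain ⟨F, hF⟩ := FM.map hi (by decide) (by decide) (by decide) (fmB_spec fm2_ok)
  rw [he] at hF
  simp only [k2, k1, mk, num, map, verts, join.injEq, leaf.injEq] at he
  have e1 : e 3 = C.root := he.2.2.1
  have e2 : e 4 = f C.root := he.2.2.2
  rw [e1, e2] at hF
  exact ⟨F, hF⟩

theorem graft3 {x y w : V} {C : RT V} (hn : (mk x [mk y [C], leaf w]).verts.Nodup)
    (hC : Semi C) : Good (mk x [mk y [C], leaf w]) := by
  obtain ⟨f, hf⟩ := hC
  refine graft_tree hn hf rfl fun hs => ?_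
  obtain ⟨e, he, hi⟩ := exists_label _ (mk () [p3, k1]) rfl hs
  obtain ⟨F, hF⟩ := FM.map hi (by decide) (by decide) (by decide) (fmB_spec fm3_ok)
  rw [he] at hF
  simp only [p3, k2, k1, mk, num, map, verts, join.injEq, leaf.injEq] at he
  have e1 : e 3 = C.root := he.2.2.1
  have e2 : e 4 = f C.root := he.2.2.2
  rw [e1, e2] at hF
  exact ⟨F, hF⟩

theorem graft4 {x y w p q : V} {C : RT V}
    (hn : (mk x [mk y [C, leaf w], mk p [leaf q]]).verts.Nodup)
    (hC : Semi C) : Good (mk x [mk y [C, leaf w], mk p [leaf q]]) := by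
  obtain ⟨f, hf⟩ := hC
  refine graft_tree hn hf rfl fun hs => ?_
  obtain ⟨e, he, hi⟩ := exists_label _ (mk () [mk () [k2, k1], k2]) rfl hs
  obtain ⟨F, hF⟩ := FM.map hi (by decide) (by decide) (by decide) (fmB_spec fm4_ok)
  rw [he] at hF
  simp only [k2, k1, mk, num, map, verts, join.injEq, leaf.injEq] at he
  have e1 : e 5 = C.root := he.2.2.1
  have e2 : e 6 = f C.root := he.2.2.2
  rw [e1, e2] at hF
  exact ⟨F, hF⟩

/-! ### The main case analysis -/

def IH (V : Type*) (n : ℕ) : Prop :=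
  ∀ t : RT V, t.verts.length < n → t.verts.Nodup → Ok t → Good t

theorem len_pos (t : RT V) : 0 < t.verts.length := List.length_pos_of_mem t.root_mem

theorem len_cons (x : V) (b : RT V) (l : List (RT V)) :
    (mk x (b :: l)).verts.length = (mk x l).verts.length + b.verts.length := by
  simp [mk, verts]

theorem bad_shape {t : RT V} (h : Bad t) : t.shape = mk () [k2, k2] := by
  obtain ⟨x, l, rfl⟩ := exists_mk t
  obtain ⟨h1, h2⟩ := h
  rw [kids_mk] at h1 h2
  obtain ⟨a, b, rfl⟩ := List.length_eq_two.1 h1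
  have e1 : a.shape = k2 := h2 a (by simp)
  have e2 : b.shape = k2 := h2 b (by simp)
  rw [shape_mk, List.map_cons, List.map_cons, List.map_nil, e1, e2]

theorem hang_nonstar {n : ℕ} (ih : IH V n) {u : V} {b : RT V} (hb : b.verts.length < n)
    (hn : (mk u [b]).verts.Nodup) (hs : ¬ Star b) : Hang 3 (mk u [b]) := by
  by_cases h : Bad b
  · refine hang_of_shape hn ?_
    rw [shape_mk, List.map_cons, List.map_nil, bad_shape h]
    decide
  · exact hang_of_good hn (ih b hb ((nd_mk.1 hn).2.1 b (by simp)) ⟨hs, h⟩)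

theorem semi_nonstar {n : ℕ} (ih : IH V n) {b : RT V} (hb : b.verts.length < n)
    (hn : b.verts.Nodup) (hs : ¬ Star b) : Semi b := by
  by_cases h : Bad b
  · exact semi_of_shape hn (bad_shape h)
  · exact (ih b hb hn ⟨hs, h⟩).semi

theorem hang_pair {u : V} {p q : RT V} (hn : (mk u [p, q]).verts.Nodup)
    (hp : p.shape ∈ stars) (hq : q.shape ∈ stars) : Hang 3 (mk u [p, q]) := by
  refine hang_of_shape hn ?_
  have key : ∀ p ∈ stars, ∀ q ∈ stars, mk () [p, q] ∈ hangTable.map Prod.fst := by decide +kernel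
  rw [shape_mk]
  exact key _ hp _ hq

theorem R1 {n : ℕ} (ih : IH V n) {x : V} {b : RT V} {l : List (RT V)}
    (hn : (mk x (b :: l)).verts.Nodup) (hl : (mk x (b :: l)).verts.length ≤ n)
    (hb : ¬ Star b) (hok : Ok (mk x l)) : Good (mk x (b :: l)) := by
  have h1 := nd_append (hs := [b]) hn
  have h2 := len_pos b
  have h3 := len_pos (mk x l)
  rw [len_cons] at hl
  exact red_root (hs := [b]) hn (ih _ (by omega) h1.2.1 hok)
    (hang_nonstar ih (by omega) h1.1 hb)

theorem R2 {n : ℕ} (ih : IH V n) {x : V} {p q : RT V} {l : List (RT V)}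
    (hn : (mk x (p :: q :: l)).verts.Nodup) (hl : (mk x (p :: q :: l)).verts.length ≤ n)
    (hp : p.shape ∈ stars) (hq : q.shape ∈ stars) (hok : Ok (mk x l)) :
    Good (mk x (p :: q :: l)) := by
  have h1 := nd_append (hs := [p, q]) hn
  have h2 := len_pos p
  rw [len_cons, len_cons] at hl
  exact red_root (hs := [p, q]) hn (ih _ (by omega) h1.2.1 hok) (hang_pair h1.1 hp hq)

theorem nd_inner {x y : V} {hs m l : List (RT V)}
    (hn : (mk x (mk y (hs ++ m) :: l)).verts.Nodup) :
    (mk y hs).verts.Nodup ∧ (mk x (mk y m :: l)).verts.Nodup := by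
  have h1 := nd_mk.1 hn
  simp only [List.mem_cons, forall_eq_or_imp, List.pairwise_cons] at h1
  obtain ⟨⟨h1, h2⟩, ⟨h3, h4⟩, h5, h6⟩ := h1
  obtain ⟨n1, n2, -⟩ := nd_append h3
  have hsub : ∀ v, v ∈ (mk y m).verts → v ∈ (mk y (hs ++ m)).verts := by
    intro v
    simp only [mem_mk, List.mem_append]
    grind
  refine ⟨n1, ?_⟩
  rw [nd_mk]
  simp only [List.mem_cons, forall_eq_or_imp, List.pairwise_cons]
  exact ⟨⟨fun h => h1 (hsub _ h), h2⟩, ⟨n2, h4⟩, fun b hb v hv => h5 b hb v (hsub v hv), h6⟩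

theorem R1' {n : ℕ} (ih : IH V n) {x y : V} {b : RT V} {m l : List (RT V)}
    (hn : (mk x (mk y (b :: m) :: l)).verts.Nodup)
    (hl : (mk x (mk y (b :: m) :: l)).verts.length ≤ n)
    (hb : ¬ Star b) (hok : Ok (mk x (mk y m :: l))) : Good (mk x (mk y (b :: m) :: l)) := by
  have h1 := nd_inner (hs := [b]) hn
  have h2 := len_pos b
  have h3 := len_pos (mk x l)
  rw [len_cons, len_cons] at hl
  exact red_y (hs := [b]) hn (ih _ (by rw [len_cons]; omega) h1.2 hok)
    (hang_nonstar ih (by omega) h1.1 hb)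

theorem R2' {n : ℕ} (ih : IH V n) {x y : V} {p q : RT V} {m l : List (RT V)}
    (hn : (mk x (mk y (p :: q :: m) :: l)).verts.Nodup)
    (hl : (mk x (mk y (p :: q :: m) :: l)).verts.length ≤ n)
    (hp : p.shape ∈ stars) (hq : q.shape ∈ stars) (hok : Ok (mk x (mk y m :: l))) :
    Good (mk x (mk y (p :: q :: m) :: l)) := by
  have h1 := nd_inner (hs := [p, q]) hn
  have h2 := len_pos p
  rw [len_cons, len_cons, len_cons] at hl
  exact red_y (hs := [p, q]) hn (ih _ (by rw [len_cons]; omega) h1.2 hok)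
    (hang_pair h1.1 hp hq)

/-- permuting the subtrees -/
theorem good_perm {n : ℕ} {x : V} {l l' : List (RT V)} (h : l.Perm l')
    (hn : (mk x l).verts.Nodup) (hl : (mk x l).verts.length ≤ n)
    (hg : (mk x l').verts.Nodup → (mk x l').verts.length ≤ n → Good (mk x l')) :
    Good (mk x l) := by
  have e := eqv_perm (x := x) h
  exact (hg (e.nodup hn) (e.verts.length_eq ▸ hl)).eqv e.symm

theorem good_perm' {n : ℕ} {x y : V} {m m' l : List (RT V)} (h : m.Perm m')
    (hn : (mk x (mk y m :: l)).verts.Nodup) (hl : (mk x (mk y m :: l)).verts.length ≤ n)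
    (hg : (mk x (mk y m' :: l)).verts.Nodup → (mk x (mk y m' :: l)).verts.length ≤ n →
      Good (mk x (mk y m' :: l))) :
    Good (mk x (mk y m :: l)) := by
  have e := eqv_cons (x := x) (l := l) (eqv_perm (x := y) h)
  exact (hg (e.nodup hn) (e.verts.length_eq ▸ hl)).eqv e.symm

theorem exists_perm {b : RT V} {l : List (RT V)} (h : b ∈ l) : ∃ l', l.Perm (b :: l') := by
  obtain ⟨l1, l2, rfl⟩ := List.append_of_mem h
  exact ⟨l1 ++ l2, List.perm_middle⟩

theorem K_one {y : V} {c : RT V} : K (mk y [c]) ↔ L c := by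
  rw [K_mk]; simp

theorem step_graft {n : ℕ} (ih : IH V n) {x y : V} {C : RT V} {m rest : List (RT V)}
    (hn : (mk x (mk y (C :: m) :: rest)).verts.Nodup)
    (hl : (mk x (mk y (C :: m) :: rest)).verts.length ≤ n)
    (hC : ¬ Star C) (him : ∀ b ∈ m, Irr b) (hrest : rest.length ≤ 1) :
    Good (mk x (mk y (C :: m) :: rest)) := by
  by_cases hD : ∃ D ∈ m, ¬ Star D
  · obtain ⟨E, hE, hEs⟩ := hD
    obtain ⟨m', hm'⟩ := exists_perm hE
    refine good_perm' ((hm'.cons C).trans (List.Perm.swap E C m')) hn hl fun hn hl => ?_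
    exact R1' ih hn hl hEs (ok_of_nonstar (b := mk y (C :: m')) (by simp)
      (ok_of_nonstar (b := C) (by simp) hC).1)
  · push Not at hD
    have hCn : C.verts.Nodup :=
      (nd_mk.1 ((nd_mk.1 hn).2.1 (mk y (C :: m)) (by simp))).2.1 C (by simp)
    have hCl : C.verts.length < n := by
      rw [len_cons, len_cons] at hl
      have h3 := len_pos (mk x rest)
      omega
    have hCS := semi_nonstar ih hCl hCn hC
    match m, rest, hrest with
    | p :: q :: m, rest, _ =>
      have hp : (C :: p :: q :: m).Perm (p :: q :: C :: m) :=
        (List.Perm.swap p C (q :: m)).trans ((List.Perm.swap q C m).cons p)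
      refine good_perm' hp hn hl fun hn hl => ?_
      refine R2' ih hn hl ((him p (by simp)).star_shape (hD p (by simp)))
        ((him q (by simp)).star_shape (hD q (by simp))) ?_
      exact (ok_of_nonstar (b := mk y (C :: m)) (by simp)
        (ok_of_nonstar (b := C) (by simp) hC).1)
    | [], [], _ => exact graft1 hn hCS
    | [S'], [], _ =>
      by_cases hS : L S'
      · obtain ⟨w, rfl⟩ := hS.eq
        exact graft2 hn hCS
      · exact R1' ih hn hl hC (ok_of_one (not_cstar (by simp) hS))
    | [], [S], _ =>
      by_cases hS : L S
      · obtain ⟨w, rfl⟩ := hS.eq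
        exact graft3 hn hCS
      · exact R1' ih hn hl hC (ok_of_two (b := S) (c := mk y []) (by simp) hS (by simp)
          (not_K_of_L (L_mk.2 rfl)) (by simp))
    | [S'], [S], _ =>
      by_cases hS : K S
      · by_cases hS' : L S'
        · obtain ⟨w, rfl⟩ := hS'.eq
          obtain ⟨p, q, rfl⟩ := hS.eq
          exact graft4 hn hCS
        · exact R1' ih hn hl hC (ok_of_two (b := S) (c := mk y [S']) (by simp) hS.not_L (by simp)
            (by rwa [K_one]) (by simp))
      · exact R1' ih hn hl hC (ok_of_two (b := mk y [S']) (c := S) (by simp)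
          (not_L (b := S') (by simp)) (by simp) hS (by simp))

theorem Irr.shape4 {t : RT V} (h : Irr t) (hs : Star t) (hL : ¬ L t) :
    t.shape ∈ [k2, c2, p3, l2] := by
  have := h.star_shape hs
  rw [stars, List.mem_cons] at this
  exact this.resolve_left hL

theorem step_stars {n : ℕ} (ih : IH V n) {x y : V} {m rest : List (RT V)}
    (hn : (mk x (mk y m :: rest)).verts.Nodup)
    (hl : (mk x (mk y m :: rest)).verts.length ≤ n)
    (hB : ¬ Star (mk y m)) (hm : ∀ b ∈ m, Star b) (him : ∀ b ∈ m, Irr b)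
    (hrs : ∀ b ∈ rest, Star b) (hri : ∀ b ∈ rest, Irr b) (hrest : rest.length ≤ 1) :
    Good (mk x (mk y m :: rest)) := by
  have hN : ∃ N ∈ m, ¬ L N := by
    by_contra h
    push Not at h
    exact hB (Or.inl (fun b hb => h b (by simpa using hb)))
  obtain ⟨N, hN, hNL⟩ := hN
  obtain ⟨m', hm'⟩ := exists_perm hN
  have hB' : m' = [] → ¬ CStar N := by
    rintro rfl h
    rw [List.perm_singleton] at hm'
    subst hm'
    exact hB (Or.inr ⟨by simp, by simpa using h⟩)
  have hNs := hm N hN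
  have hNi := him N hN
  replace hm : ∀ b ∈ m', b.shape ∈ stars := fun b hb =>
    (him b (by simp [hm'.mem_iff, hb])).star_shape (hm b (by simp [hm'.mem_iff, hb]))
  have hr : ∀ b ∈ rest, b.shape ∈ stars := fun b hb => (hri b hb).star_shape (hrs b hb)
  refine good_perm' hm' hn hl fun hn hl => ?_
  clear hm' him hri hrs
  have h4 := hNi.shape4 hNs hNL
  match m', rest, hrest with
  | p :: q :: m, rest, _ =>
    have hp : (N :: p :: q :: m).Perm (p :: q :: N :: m) :=
      (List.Perm.swap p N (q :: m)).trans ((List.Perm.swap q N m).cons p)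
    refine good_perm' hp hn hl fun hn hl => ?_
    refine R2' ih hn hl (hm p (by simp)) (hm q (by simp)) ?_
    have hc : ¬ CStar (mk y (N :: m)) := not_cstar (by simp) hNL
    match rest, ‹rest.length ≤ 1› with
    | [], _ => exact ok_of_one hc
    | [S], _ =>
      exact ok_of_two (b := mk y (N :: m)) (c := mk y (N :: m)) (by simp)
        (fun h => hc h.cstar) (by simp) (fun h => hc h.cstar) (by simp)
  | [], [], _ =>
    have hs := hNi.star_shape' hNs (hB' rfl)
    refine good_of_shape hn ?_
    simp only [shape_mk, List.map_cons, List.map_nil]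
    rcases hs with h | h <;> rw [h] <;> decide +kernel
  | [], [S], _ =>
    have hs := hNi.star_shape' hNs (hB' rfl)
    refine good_of_shape hn ?_
    simp only [shape_mk, List.map_cons, List.map_nil]
    have key : ∀ N ∈ [p3, l2], ∀ S ∈ stars,
      mk () [mk () [N], S] ∈ baseTable.map Prod.fst := by decide +kernel
    exact key _ (by simpa using hs) _ (hr S (by simp))
  | [S'], [], _ =>
    refine good_of_shape hn ?_
    simp only [shape_mk, List.map_cons, List.map_nil]
    have key : ∀ N ∈ [k2, c2, p3, l2], ∀ S ∈ stars,
      mk () [mk () [N, S]] ∈ baseTable.map Prod.fst := by decide +kernel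
    exact key _ h4 _ (hm S' (by simp))
  | [S'], [S], _ =>
    by_cases hS : L S
    · refine good_of_shape hn ?_
      simp only [shape_mk, List.map_cons, List.map_nil]
      have key : ∀ N ∈ [k2, c2, p3, l2], ∀ S ∈ stars,
        mk () [mk () [N, S], k1] ∈ baseTable.map Prod.fst := by decide +kernel
      rw [show S.shape = k1 from hS]
      exact key _ h4 _ (hm S' (by simp))
    · exact R2' ih hn hl (hNi.star_shape hNs) (hm S' (by simp))
        (ok_of_two (b := S) (c := mk y []) (by simp) hS (by simp)
          (not_K_of_L (L_mk.2 rfl)) (by simp))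

theorem step_all_stars {n : ℕ} (ih : IH V n) {x : V} {l : List (RT V)}
    (hn : (mk x l).verts.Nodup) (hl : (mk x l).verts.length ≤ n) (hok : Ok (mk x l))
    (hs : ∀ b ∈ l, Star b) (hi : ∀ b ∈ l, Irr b) : Good (mk x l) := by
  have hN : ∃ N ∈ l, ¬ L N := by
    by_contra h
    push Not at h
    exact hok.1 (Or.inl (fun b hb => h b (by simpa using hb)))
  obtain ⟨N, hN, hNL⟩ := hN
  obtain ⟨r, hr⟩ := exists_perm hN
  have hB : r = [] → ¬ CStar N := by
    rintro rfl h
    rw [List.perm_singleton] at hr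
    subst hr
    exact hok.1 (Or.inr ⟨by simp, by simpa using h⟩)
  have hK : ∀ S, r = [S] → ¬ (K N ∧ K S) := by
    rintro S rfl ⟨h1, h2⟩
    refine hok.2 ⟨by simpa using hr.length_eq, ?_⟩
    intro b hb
    rw [kids_mk, hr.mem_iff] at hb
    simp only [List.mem_cons, List.not_mem_nil, or_false] at hb
    rcases hb with rfl | rfl
    · exact h1
    · exact h2
  have hNs := hs N hN
  have hNi := hi N hN
  have h4 := hNi.shape4 hNs hNL
  have hN5 := hNi.star_shape hNs
  have hsr : ∀ b ∈ r, Star b := fun b hb => hs b (by simp [hr.mem_iff, hb])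
  have hir : ∀ b ∈ r, Irr b := fun b hb => hi b (by simp [hr.mem_iff, hb])
  have hst : ∀ b ∈ r, b.shape ∈ stars := fun b hb => (hir b hb).star_shape (hsr b hb)
  refine good_perm hr hn hl fun hn hl => ?_
  clear hr hs hi hok
  match r with
  | [] =>
    have hs := hNi.star_shape' hNs (hB rfl)
    refine good_of_shape hn ?_
    simp only [shape_mk, List.map_cons, List.map_nil]
    rcases hs with h | h <;> rw [h] <;> decide +kernel
  | [S] =>
    refine good_of_shape hn ?_
    simp only [shape_mk, List.map_cons, List.map_nil]
    have key : ∀ N ∈ [k2, c2, p3, l2], ∀ S ∈ stars, ¬ (N = k2 ∧ S = k2) →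
      mk () [N, S] ∈ baseTable.map Prod.fst := by decide +kernel
    exact key _ h4 _ (hst S (by simp)) (hK S rfl)
  | [S, R] =>
    by_cases d1 : CStar N
    · by_cases d2 : CStar S
      · by_cases d3 : CStar R
        · refine good_of_shape hn ?_
          simp only [shape_mk, List.map_cons, List.map_nil]
          have key : ∀ N ∈ [k1, k2, c2], ¬ N = k1 → ∀ S ∈ [k1, k2, c2], ∀ R ∈ [k1, k2, c2],
            mk () [N, S, R] ∈ baseTable.map Prod.fst := by decide +kernel
          exact key _ (hNi.cstar_shape d1) hNL _ ((hir S (by simp)).cstar_shape d2) _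
            ((hir R (by simp)).cstar_shape d3)
        · exact R2 ih hn hl hN5 (hst S (by simp)) (ok_of_one d3)
      · refine good_perm ((List.Perm.swap R S []).cons N) hn hl fun hn hl => ?_
        exact R2 ih hn hl hN5 (hst R (by simp)) (ok_of_one d2)
    · have hp : [N, S, R].Perm [S, R, N] :=
        (List.Perm.swap S N [R]).trans ((List.Perm.swap R N []).cons S)
      refine good_perm hp hn hl fun hn hl => ?_
      exact R2 ih hn hl (hst S (by simp)) (hst R (by simp)) (ok_of_one d1)
  | [S, R, Q] =>
    have key : ∀ {S R Q : RT V}, S.shape ∈ stars → R.shape ∈ stars → ¬ (K N ∧ K Q) →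
        (mk x [N, S, R, Q]).verts.Nodup → (mk x [N, S, R, Q]).verts.length ≤ n →
        Good (mk x [N, S, R, Q]) := by
      intro S R Q hS hR hQ hn hl
      have hp : [N, S, R, Q].Perm [S, R, N, Q] :=
        (List.Perm.swap S N [R, Q]).trans ((List.Perm.swap R N [Q]).cons S)
      refine good_perm hp hn hl fun hn hl => ?_
      refine R2 ih hn hl hS hR ?_
      by_cases h : K N
      · exact ok_of_two (b := N) (c := Q) (by simp) hNL (by simp) (fun h2 => hQ ⟨h, h2⟩) (by simp)
      · exact ok_of_two (b := N) (c := N) (by simp) hNL (by simp) h (by simp)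
    have sS := hst S (by simp)
    have sR := hst R (by simp)
    have sQ := hst Q (by simp)
    by_cases hQ : K N ∧ K Q
    · by_cases hR : K N ∧ K R
      · by_cases hS : K N ∧ K S
        · refine good_of_shape hn ?_
          simp only [shape_mk, List.map_cons, List.map_nil]
          rw [show N.shape = k2 from hS.1, show S.shape = k2 from hS.2,
            show R.shape = k2 from hR.2, show Q.shape = k2 from hQ.2]
          decide +kernel
        · have hp : [S, R, Q].Perm [R, Q, S] :=
            (List.Perm.swap R S [Q]).trans ((List.Perm.swap Q S []).cons R)
          exact good_perm (hp.cons N) hn hl (key sR sQ hS)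
      · exact good_perm (((List.Perm.swap Q R []).cons S).cons N) hn hl (key sS sQ hR)
    · exact key sS sR hQ hn hl
  | S :: R :: P :: Q :: r =>
    have hp : (N :: S :: R :: P :: Q :: r).Perm (S :: R :: N :: P :: Q :: r) :=
      (List.Perm.swap S N _).trans ((List.Perm.swap R N _).cons S)
    refine good_perm hp hn hl fun hn hl => ?_
    exact R2 ih hn hl (hst S (by simp)) (hst R (by simp))
      (ok_of_three (b := N) (by simp) hNL (by simp))

theorem step {n : ℕ} (ih : IH V n) {t : RT V} (hn : t.verts.Nodup) (hl : t.verts.length ≤ n)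
    (hok : Ok t) (hi : Irr t) : Good t := by
  obtain ⟨x, l, rfl⟩ := exists_mk t
  have hi : ∀ b ∈ l, Irr b := fun b hb => hi.kid hb
  by_cases h : ∃ B ∈ l, ¬ Star B
  · obtain ⟨B, hB, hBs⟩ := h
    obtain ⟨rest, hr⟩ := exists_perm hB
    have hBi := hi B hB
    replace hi : ∀ b ∈ rest, Irr b := fun b hb => hi b (by simp [hr.mem_iff, hb])
    refine good_perm hr hn hl fun hn hl => ?_
    clear hr hok
    by_cases h : ∃ E ∈ rest, ¬ Star E
    · obtain ⟨E, hE, hEs⟩ := h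
      obtain ⟨r, hr⟩ := exists_perm hE
      refine good_perm ((hr.cons B).trans (List.Perm.swap E B r)) hn hl fun hn hl => ?_
      exact R1 ih hn hl hEs (ok_of_nonstar (b := B) (by simp) hBs)
    · push Not at h
      have hrest : rest.length ≤ 1 ∨ ∃ p q r, rest = p :: q :: r := by
        match rest with
        | [] => simp
        | [_] => simp
        | p :: q :: r => exact Or.inr ⟨p, q, r, rfl⟩
      rcases hrest with hrest | ⟨p, q, r, rfl⟩
      · obtain ⟨y, m, rfl⟩ := exists_mk B
        have him : ∀ b ∈ m, Irr b := fun b hb => hBi.kid hb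
        by_cases hm : ∃ C ∈ m, ¬ Star C
        · obtain ⟨C, hC, hCs⟩ := hm
          obtain ⟨m', hm'⟩ := exists_perm hC
          refine good_perm' hm' hn hl fun hn hl => ?_
          exact step_graft ih hn hl hCs (fun b hb => him b (by simp [hm'.mem_iff, hb])) hrest
        · push Not at hm
          exact step_stars ih hn hl hBs hm him h hi hrest
      · have hp : (B :: p :: q :: r).Perm (p :: q :: B :: r) :=
          (List.Perm.swap p B (q :: r)).trans ((List.Perm.swap q B r).cons p)
        refine good_perm hp hn hl fun hn hl => ?_
        exact R2 ih hn hl ((hi p (by simp)).star_shape (h p (by simp)))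
          ((hi q (by simp)).star_shape (h q (by simp))) (ok_of_nonstar (b := B) (by simp) hBs)
  · push Not at h
    exact step_all_stars ih hn hl hok h hi

theorem main (n : ℕ) : IH V n := by
  induction n with
  | zero => intro t h; omega
  | succ n ih =>
    intro t hl hn hok
    by_cases h : Irr t
    · exact step ih hn (by omega) hok h
    · simp only [Irr, not_forall, not_not] at h
      obtain ⟨t', h⟩ := h
      by_cases hb : Bad t'
      · exact h.bad hn hb
      · obtain ⟨h1, h2, h3⟩ := h.good hn
        exact h3 (ih t' (by omega) h1 ⟨fun hs => hok.1 (h.star hs), hb⟩)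

theorem good_of_ok {t : RT V} (hn : t.verts.Nodup) (hok : Ok t) : Good t :=
  main _ t (Nat.lt_succ_self _) hn hok

/-! ### Link with simple graphs -/

theorem exists_insert (t : RT V) {u w : V} (hu : u ∈ t.verts) : ∃ t' : RT V, t'.root = t.root ∧
    t'.verts.Perm (w :: t.verts) ∧
    ∀ a b, t'.Adj a b → t.Adj a b ∨ (a = u ∧ b = w) ∨ (b = u ∧ a = w) := by
  induction t with
  | leaf v =>
    simp only [verts, List.mem_singleton] at hu
    subst hu
    refine ⟨join (leaf u) (leaf w), rfl, List.Perm.swap _ _ _, ?_⟩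
    intro a b
    simp [adj_join, root]
  | join c d ihc ihd =>
    simp only [verts, List.mem_append] at hu
    rcases hu with hu | hu
    · obtain ⟨t', h1, h2, h3⟩ := ihc hu
      refine ⟨join t' d, h1, h2.append_right _, ?_⟩
      intro a b
      simp only [adj_join, h1]
      rintro (h | h)
      · rcases h3 a b h with h | h
        · exact Or.inl (Or.inl h)
        · exact Or.inr h
      · exact Or.inl (Or.inr h)
    · obtain ⟨t', h1, h2, h3⟩ := ihd hu
      refine ⟨join c t', rfl, (h2.append_left _).trans List.perm_middle, ?_⟩
      intro a b
      simp only [adj_join, h1]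
      rintro (h | h | h)
      · exact Or.inl (Or.inl h)
      · rcases h3 a b h with h | h
        · exact Or.inl (Or.inr (Or.inl h))
        · exact Or.inr h
      · exact Or.inl (Or.inr (Or.inr h))

theorem exists_D_root (t : RT V) {v : V} (hv : v ∈ t.verts) : ∃ k, t.D k t.root v := by
  induction t with
  | leaf w =>
    simp only [verts, List.mem_singleton] at hv
    subst hv
    exact ⟨0, rfl⟩
  | join c d ihc ihd =>
    simp only [verts, List.mem_append] at hv
    rcases hv with hv | hv
    · obtain ⟨k, hk⟩ := ihc hv
      exact ⟨k, D.sub (fun a b h => adj_join.2 (Or.inl h)) hk⟩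
    · obtain ⟨k, hk⟩ := ihd hv
      have h1 : (join c d).D k d.root v := D.sub (fun a b h => adj_join.2 (Or.inr (Or.inl h))) hk
      exact ⟨k + 1, Or.inr ⟨d.root, adj_join.2 (Or.inr (Or.inr (Or.inl ⟨rfl, rfl⟩))), h1⟩⟩

theorem D.walk {t : RT V} {G : SimpleGraph V} (h : ∀ a b, t.Adj a b → G.Adj a b) {v : V} :
    ∀ {k : ℕ} {u : V}, t.D k u v → ∃ p : G.Walk u v, p.length ≤ k := by
  intro k
  induction k with
  | zero =>
    intro u hu
    cases hu
    exact ⟨SimpleGraph.Walk.nil, by simp⟩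
  | succ k ih =>
    intro u hu
    rcases hu with hu | ⟨w, hw, hu⟩
    · subst hu
      exact ⟨SimpleGraph.Walk.nil, by simp⟩
    · obtain ⟨p, hp⟩ := ih hu
      exact ⟨SimpleGraph.Walk.cons (h _ _ hw) p, by simpa using hp⟩

theorem exists_tree [Fintype V] (G : SimpleGraph V) (hG : G.Connected) (x : V) :
    ∃ t : RT V, t.root = x ∧ t.verts.Nodup ∧ (∀ v, v ∈ t.verts) ∧
      ∀ a b, t.Adj a b → G.Adj a b := by
  classical
  have grow : ∀ k : ℕ, ∃ t : RT V, t.root = x ∧ t.verts.Nodup ∧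
      (∀ a b, t.Adj a b → G.Adj a b) ∧ ((∀ v, v ∈ t.verts) ∨ k < t.verts.length) := by
    intro k
    induction k with
    | zero => exact ⟨leaf x, rfl, by simp [verts], by simp, Or.inr (by simp [verts])⟩
    | succ k ih =>
      obtain ⟨t, h1, h2, h3, h4⟩ := ih
      by_cases hall : ∀ v, v ∈ t.verts
      · exact ⟨t, h1, h2, h3, Or.inl hall⟩
      · have hk := h4.resolve_left hall
        push Not at hall
        obtain ⟨v, hv⟩ := hall
        obtain ⟨p⟩ := hG.preconnected t.root v
        obtain ⟨d, -, hd1, hd2⟩ := p.exists_boundary_dart {w | w ∈ t.verts} t.root_mem hv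
        obtain ⟨t', e1, e2, e3⟩ := exists_insert t (w := d.snd) hd1
        refine ⟨t', e1.trans h1, ?_, ?_, Or.inr ?_⟩
        · rw [e2.nodup_iff, List.nodup_cons]
          exact ⟨hd2, h2⟩
        · intro a b hab
          rcases e3 a b hab with h | ⟨rfl, rfl⟩ | ⟨rfl, rfl⟩
          · exact h3 a b h
          · exact d.adj
          · exact d.adj.symm
        · rw [e2.length_eq, List.length_cons]
          omega
  obtain ⟨t, h1, h2, h3, h4⟩ := grow (Fintype.card V)
  refine ⟨t, h1, h2, h4.resolve_right ?_, h3⟩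
  have := h2.length_le_card
  omega

theorem exists_tree' [Fintype V] (G : SimpleGraph V) (hG : G.IsTree) (x : V) :
    ∃ t : RT V, t.root = x ∧ t.verts.Nodup ∧ (∀ v, v ∈ t.verts) ∧
      ∀ a b, t.Adj a b ↔ G.Adj a b := by
  obtain ⟨t, h1, h2, h3, h4⟩ := exists_tree G hG.connected x
  refine ⟨t, h1, h2, h3, fun a b => ⟨h4 a b, ?_⟩⟩
  let T : SimpleGraph V := ⟨t.Adj, ⟨fun a b h => h.symm⟩, ⟨fun a h => adj_irrefl h2 h rfl⟩⟩
  have hT : T.Connected := by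
    have : Nonempty V := ⟨x⟩
    have hr : ∀ v, T.Reachable t.root v := by
      intro v
      obtain ⟨k, hk⟩ := exists_D_root t (h3 v)
      obtain ⟨p, -⟩ := hk.walk (G := T) (fun a b h => h)
      exact ⟨p⟩
    exact ⟨fun u v => (hr u).symm.trans (hr v)⟩
  exact fun h => (SimpleGraph.isTree_iff_minimal_connected.1 hG).2 hT (fun a b => h4 a b) h

theorem CStar.adj {t : RT V} (h : CStar t) {w : V} (hw : w ∈ t.verts) (hne : w ≠ t.root) :
    t.Adj t.root w := by
  obtain ⟨x, l, rfl⟩ := exists_mk t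
  rw [mem_mk] at hw
  rw [root_mk] at hne ⊢
  obtain ⟨b, hb, hw⟩ := hw.resolve_left hne
  obtain ⟨v, rfl⟩ := (h b (by simpa using hb)).eq
  simp only [verts, List.mem_singleton] at hw
  subst hw
  rw [adj_mk]
  exact Or.inr (Or.inl ⟨rfl, leaf w, hb, rfl⟩)

theorem Star.adj {t : RT V} (h : Star t) : ∃ v, ∀ w ∈ t.verts, w ≠ v → t.Adj v w := by
  rcases h with h | ⟨h1, h2⟩
  · exact ⟨t.root, fun w hw hne => h.adj hw hne⟩
  · obtain ⟨x, l, rfl⟩ := exists_mk t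
    rw [kids_mk] at h1 h2
    obtain ⟨b, rfl⟩ := List.length_eq_one_iff.1 h1
    refine ⟨b.root, fun w hw hne => ?_⟩
    simp only [mem_mk, List.mem_singleton, exists_eq_left] at hw
    simp only [adj_mk, List.mem_singleton, exists_eq_left]
    rcases hw with rfl | hw
    · simp
    · exact Or.inl ((h2 b (by simp)).adj hw hne)

theorem Bad.iso {t : RT V} {G : SimpleGraph V} (h : Bad t) (hn : t.verts.Nodup)
    (hall : ∀ v, v ∈ t.verts) (ha : ∀ a b, t.Adj a b ↔ G.Adj a b) :
    ∃ φ : G ≃g SimpleGraph.pathGraph 5, φ t.root = 2 := by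
  obtain ⟨x, l, rfl⟩ := exists_mk t
  obtain ⟨h1, h2⟩ := h
  rw [kids_mk] at h1 h2
  obtain ⟨p, q, rfl⟩ := List.length_eq_two.1 h1
  obtain ⟨a, b, rfl⟩ := (h2 p (by simp)).eq
  obtain ⟨c, d, rfl⟩ := (h2 q (by simp)).eq
  simp only [mk, verts, List.nodup_append, List.mem_append, List.mem_singleton] at hn
  simp only [mk, verts, List.mem_append, List.mem_singleton] at hall
  simp only [mk, adj_join, adj_leaf, root, false_or] at ha
  let e : Fin 5 → V := ![b, a, x, c, d]
  have hxa : x ≠ a := by grind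
  have hxb : x ≠ b := by grind
  have hxc : x ≠ c := by grind
  have hxd : x ≠ d := by grind
  have hab : a ≠ b := by grind
  have hac : a ≠ c := by grind
  have had : a ≠ d := by grind
  have hbc : b ≠ c := by grind
  have hbd : b ≠ d := by grind
  have hcd : c ≠ d := by grind
  have hinj : Function.Injective e := by
    intro i j hij
    fin_cases i <;> fin_cases j <;> simp [e] at hij ⊢ <;>
      simp_all
  have hsurj : Function.Surjective e := by
    intro v
    rcases hall v with (h | h | h) | h | h
    · exact ⟨2, h.symm⟩
    · exact ⟨3, h.symm⟩
    · exact ⟨4, h.symm⟩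
    · exact ⟨1, h.symm⟩
    · exact ⟨0, h.symm⟩
  let E := Equiv.ofBijective e ⟨hinj, hsurj⟩
  have hE : ∀ i j, G.Adj (E i) (E j) ↔ (SimpleGraph.pathGraph 5).Adj i j := by
    intro i j
    show G.Adj (e i) (e j) ↔ _
    rw [← ha, SimpleGraph.pathGraph_adj]
    clear hn hall ha E hsurj hinj h1 h2
    fin_cases i <;> fin_cases j <;>
      simp [e, hxa, hxb, hxc, hxd, hab, hac, had, hbc, hbd, hcd, hxa.symm, hxb.symm, hxc.symm,
        hxd.symm, hab.symm, hac.symm, had.symm, hbc.symm, hbd.symm, hcd.symm]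
  let ψ : SimpleGraph.pathGraph 5 ≃g G := ⟨E, fun {i j} => hE i j⟩
  refine ⟨ψ.symm, ?_⟩
  have : ψ 2 = x := rfl
  rw [root_mk, ← this]
  exact ψ.symm_apply_apply 2

end RT

theorem stmt14 {V : Type*} [Fintype V] (G : SimpleGraph V)
    (hG : IsNonStarTree G) (x : V)
    (hx : ∀ φ : G ≃g pathGraph 5, φ x ≠ 2) :
    ∃ σ : Equiv.Perm V,
      (∀ v, σ v ≠ v) ∧
      (∀ u v, G.Adj u v → ¬ G.Adj (σ u) (σ v)) ∧
      (∀ u v, G.Adj u v → G.dist (σ u) (σ v) ≤ 5) ∧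
      G.dist x (σ x) = 1 ∧
      (∀ y, G.Adj x y → G.dist y (σ y) ≤ 2) ∧
      (∀ y, (∃! w, G.Adj y w) → G.dist y (σ y) ≤ 4) := by
  obtain ⟨t, h1, h2, h3, h4⟩ := RT.exists_tree' G hG.1 x
  have hok : RT.Ok t := by
    constructor
    · intro h
      obtain ⟨v, hv⟩ := h.adj
      exact hG.2 ⟨v, fun w hw => (h4 _ _).1 (hv w (h3 w) hw)⟩
    · intro h
      obtain ⟨φ, hφ⟩ := h.iso h2 h3 h4
      exact hx φ (h1 ▸ hφ)
  obtain ⟨f, hf⟩ := RT.good_of_ok h2 hok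
  have hinj : Function.Injective f := fun a b h => hf.inj a (h3 a) b (h3 b) h
  have hd : ∀ {k u v}, t.D k u v → G.dist u v ≤ k := by
    intro k u v h
    obtain ⟨p, hp⟩ := h.walk (G := G) (fun a b => (h4 a b).1)
    exact (SimpleGraph.dist_le p).trans hp
  refine ⟨Equiv.ofBijective f (Finite.injective_iff_bijective.1 hinj), ?_, ?_, ?_, ?_, ?_, ?_⟩
  · exact fun v => hf.ne v (h3 v)
  · intro u v h hc
    exact (hf.edge u v ((h4 _ _).2 h)).1 ((h4 _ _).2 hc)
  · intro u v h
    exact hd (hf.edge u v ((h4 _ _).2 h)).2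
  · have := hf.root
    rw [h1, h4] at this
    exact SimpleGraph.dist_eq_one_iff_adj.2 this
  · intro y hy
    exact hd (hf.nbr y (by rw [h1, h4]; exact hy))
  · intro y _
    exact hd (hf.all4 y (h3 y))
end

section
/- Let T be a tree with a vertex x of degree 1 whose unique neighbor y has degree at least 3, and suppose every connected component of T − y not containing x is a path of length at most 2 attached to y at an end vertex (a 'neighbor F-tree' of y) and is not a single vertex. Then there exists a fixed-point-free permutation σ of V(T) that is a 2-placement of T, maps every edge to a pair at distance at most 6, satisfies dist(x,σ(x)) ≤ 2, dist(z,σ(z)) ≤ 3 for every neighbor z of x, dist(z,σ(z)) ≤ 4 for every leaf z, and has all cycles of length at most 5. -/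
open SimpleGraph

/-- The branch of the tree `G` at the edge `y z`: the set of vertices of the
connected component of `G - yz` containing `z`. -/
def branch {V : Type*} (G : SimpleGraph V) (y z : V) : Set V :=
  {v | (G.deleteEdges {s(y, z)}).Reachable z v}

/-- The branch at `z` is a neighbor F-tree of `y` which is not a single vertex:
it is a path of length 1, or a path of length 2 with `z` an end vertex. -/
def IsNeighborFTreeNotP1 {V : Type*} (G : SimpleGraph V) (y z : V) : Prop :=
  Nonempty ((G.induce (branch G y z)) ≃g pathGraph 2) ∨
    ∃ φ : (G.induce (branch G y z)) ≃g pathGraph 3,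
      φ ⟨z, Reachable.refl z⟩ = 0 ∨ φ ⟨z, Reachable.refl z⟩ = 2

/-- Model of the spider: legs indexed by `I`, a leg has a third vertex iff `Q i`. -/
inductive SpM (I : Type*) (Q : I → Prop) where
  | x : SpM I Q
  | y : SpM I Q
  | a (i : I) : SpM I Q
  | b (i : I) : SpM I Q
  | c (i : I) (h : Q i) : SpM I Q

namespace SpM

variable {I : Type*} {Q : I → Prop}

/-- adjacency in the model -/
def adj : SpM I Q → SpM I Q → Prop
  | x, y => True
  | y, x => True
  | y, a _ => True
  | a _, y => True
  | a i, b j => i = j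
  | b i, a j => i = j
  | b i, c j _ => i = j
  | c i _, b j => i = j
  | _, _ => False

/-- distance to the center -/
def dep : SpM I Q → ℕ
  | x => 1
  | y => 0
  | a _ => 1
  | b _ => 2
  | c _ _ => 3

open Classical in
/-- the placement -/
noncomputable def f (t : I → I) (i0 : I) : SpM I Q → SpM I Q
  | x => y
  | y => b i0
  | a i =>
    if i = i0 then (if t i0 = i0 then x else a (t i0))
    else if i = t i0 then (if h : Q i then c i h else b i)
    else if h : Q i then (if Q (t i) then b (t i) else c i h) else b i
  | b i =>
    if i = i0 then (if h : Q i then c i h else if t i0 = i0 then a i0 else x)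
    else if i = t i0 then a i0
    else if h : Q i then (if Q (t i) then c i h else a (t i)) else a (t i)
  | c i _ =>
    if i = i0 then (if t i0 = i0 then a i0 else x)
    else if i = t i0 then b i
    else if Q (t i) then a (t i) else b i

variable (t : I → I) (i0 : I)

theorem f_ne (ht : ∀ i, t (t i) = i) (hfix : ∀ i, t i = i → i = i0) (v : SpM I Q) :
    f t i0 v ≠ v := by
  have := ht i0
  rcases v with _ | _ | i | i | ⟨i, h⟩
  · simp [f]
  · simp [f]
  all_goals
    have h1 := ht i
    have h2 := hfix i
    simp only [f]
    split_ifs <;> simp <;> grind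

theorem f_adj (ht : ∀ i, t (t i) = i) (hfix : ∀ i, t i = i → i = i0) (u v : SpM I Q)
    (huv : adj u v) : ¬ adj (f t i0 u) (f t i0 v) := by
  have h0 := ht i0
  have key : ∀ u v : SpM I Q, adj u v → u.dep < v.dep → ¬ adj (f t i0 u) (f t i0 v) ∧
      ¬ adj (f t i0 v) (f t i0 u) := by
    intro u v huv hd
    rcases u with _ | _ | i | i | ⟨i, h⟩ <;> rcases v with _ | _ | j | j | ⟨j, h'⟩ <;>
      simp only [adj, dep] at huv hd <;> try omega
    · simp [f, adj]
    · have h1 := ht j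
      have h2 := hfix j
      simp only [f]
      split_ifs <;> simp only [adj] <;> grind
    · subst huv
      have h1 := ht i
      have h2 := hfix i
      simp only [f]
      split_ifs <;> simp only [adj] <;> grind
    · subst huv
      have h1 := ht i
      have h2 := hfix i
      simp only [f]
      split_ifs <;> simp only [adj] <;> grind
  have hs : adj v u := by
    rcases u with _ | _ | i | i | ⟨i, h⟩ <;> rcases v with _ | _ | j | j | ⟨j, h'⟩ <;>
      simp only [adj] at huv ⊢ <;> exact huv.symm
  rcases lt_trichotomy u.dep v.dep with h | h | h
  · exact (key u v huv h).1
  · exfalso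
    rcases u with _ | _ | i | i | ⟨i, h⟩ <;> rcases v with _ | _ | j | j | ⟨j, h'⟩ <;>
      simp [adj, dep] at huv h
  · exact (key v u hs h).2

theorem f_cyc (ht : ∀ i, t (t i) = i) (hfix : ∀ i, t i = i → i = i0) (v : SpM I Q) :
    ∃ n, 0 < n ∧ n ≤ 5 ∧ (f t i0)^[n] v = v := by
  suffices f t i0 (f t i0 v) = v ∨ f t i0 (f t i0 (f t i0 v)) = v ∨
    f t i0 (f t i0 (f t i0 (f t i0 v))) = v ∨
    f t i0 (f t i0 (f t i0 (f t i0 (f t i0 v)))) = v by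
    rcases this with h | h | h | h
    exacts [⟨2, by omega, by omega, h⟩, ⟨3, by omega, by omega, h⟩, ⟨4, by omega, by omega, h⟩,
      ⟨5, by omega, by omega, h⟩]
  have h0 := ht i0
  have hbase : ∀ i, i = i0 ∨ i = t i0 ∨ (i ≠ i0 ∧ i ≠ t i0 ∧ t i ≠ i0 ∧ t i ≠ t i0 ∧ t i ≠ i) := by
    intro i
    have h1 := ht i
    have h2 := hfix i
    grind
  have h0' : i0 = t i0 ↔ t i0 = i0 := eq_comm
  rcases v with _ | _ | i | i | ⟨i, h⟩
  · clear hbase hfix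
    by_cases hq0 : Q i0 <;> by_cases he : t i0 = i0 <;> simp [f, *]
  · clear hbase hfix
    by_cases hq0 : Q i0 <;> by_cases he : t i0 = i0 <;> simp [f, *]
  all_goals
    rcases hbase i with rfl | hi | ⟨g1, g2, g3, g4, g5⟩
    · clear hbase hfix
      by_cases hq0 : Q i <;> by_cases hq1 : Q (t i) <;> by_cases he : t i = i <;> simp_all [f]
    · clear hbase hfix
      subst hi
      by_cases he : t i0 = i0
      · have hqq : Q (t i0) ↔ Q i0 := by rw [he]
        by_cases hq0 : Q i0 <;> first | exact absurd (hqq.1 h) hq0 | simp_all [f]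
      · by_cases hq0 : Q i0 <;> by_cases hq1 : Q (t i0) <;> simp_all [f]
    · have h1 := ht i
      clear hbase hfix ht h0 h0'
      by_cases hq : Q i <;> by_cases hq' : Q (t i) <;> simp [f, *]

theorem f_dep (v : SpM I Q) : v.dep + (f t i0 v).dep ≤ 4 ∨ adj v (f t i0 v) := by
  rcases v with _ | _ | i | i | ⟨i, h⟩
  · simp [f, dep]
  · simp [f, dep]
  all_goals
    simp only [f]
    split_ifs <;> simp [adj, dep]

theorem dep_le (v : SpM I Q) : v.dep ≤ 3 := by
  rcases v with _ | _ | i | i | ⟨i, h⟩ <;> simp [dep]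

end SpM

/-- An involution with at most one fixed point. -/
theorem exists_invol (I : Type*) [Fintype I] [Nonempty I] :
    ∃ (t : I → I) (i0 : I), (∀ i, t (t i) = i) ∧ ∀ i, t i = i → i = i0 := by
  classical
  let e := Fintype.equivFin I
  let t : I → I := fun i => e.symm (Fin.rev (e i))
  have huniq : ∀ i j, t i = i → t j = j → i = j := by
    intro i j hi hj
    have hi' : Fin.rev (e i) = e i := by simpa [t, Equiv.symm_apply_eq] using hi
    have hj' : Fin.rev (e j) = e j := by simpa [t, Equiv.symm_apply_eq] using hj
    apply e.injective
    rw [Fin.ext_iff, Fin.val_rev] at hi' hj'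
    apply Fin.ext
    omega
  have hinv : ∀ i, t (t i) = i := by intro i; simp [t]
  by_cases h : ∃ i, t i = i
  · obtain ⟨i, hi⟩ := h
    exact ⟨t, i, hinv, fun j hj => huniq j i hj hi⟩
  · push Not at h
    exact ⟨t, Classical.arbitrary I, hinv, fun j hj => absurd hj (h j)⟩

theorem core {V : Type*} [Fintype V] [DecidableEq V] (G : SimpleGraph V)
    (hG : G.Connected) {I : Type*} [Fintype I] [Nonempty I] (Q : I → Prop)
    (e : SpM I Q ≃ V) (he : ∀ u v, G.Adj (e u) (e v) ↔ SpM.adj u v) :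
    ∃ σ : Equiv.Perm V,
      (∀ v, σ v ≠ v) ∧
      (∀ u v, G.Adj u v → ¬ G.Adj (σ u) (σ v)) ∧
      (∀ u v, G.Adj u v → G.dist (σ u) (σ v) ≤ 6) ∧
      G.dist (e SpM.x) (σ (e SpM.x)) ≤ 2 ∧
      (∀ z, G.Adj (e SpM.x) z → G.dist z (σ z) ≤ 3) ∧
      (∀ z, (∃! w, G.Adj z w) → G.dist z (σ z) ≤ 4) ∧
      (∀ v, (σ.cycleOf v).support.card ≤ 5) := by
  obtain ⟨t, i0, ht, hfix⟩ := exists_invol I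
  have hinj : Function.Injective (SpM.f (Q := Q) t i0) := by
    intro u v huv
    obtain ⟨n, hn, -, hu⟩ := SpM.f_cyc (Q := Q) t i0 ht hfix u
    obtain ⟨m, hm, -, hv⟩ := SpM.f_cyc (Q := Q) t i0 ht hfix v
    have hu' : (SpM.f t i0)^[n * m] u = u := by
      rw [Function.iterate_mul]; exact Function.iterate_fixed hu m
    have hv' : (SpM.f t i0)^[n * m] v = v := by
      rw [mul_comm, Function.iterate_mul]; exact Function.iterate_fixed hv n
    obtain ⟨k, hk⟩ : ∃ k, n * m = k + 1 := ⟨n * m - 1, by have := Nat.mul_pos hn hm; omega⟩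
    rw [← hu', ← hv', hk, Function.iterate_succ_apply, Function.iterate_succ_apply, huv]
  have : Finite (SpM I Q) := Finite.of_equiv V e.symm
  let s : Equiv.Perm (SpM I Q) := Equiv.ofBijective _ (Finite.injective_iff_bijective.mp hinj)
  have hs : ∀ v, s v = SpM.f t i0 v := fun v => rfl
  have hdist1 : ∀ u v, SpM.adj u v → G.dist (e u) (e v) ≤ 1 := fun u v h =>
    (SimpleGraph.dist_eq_one_iff_adj.mpr ((he u v).2 h)).le
  have htri : ∀ u v w, G.dist u w ≤ G.dist u v + G.dist v w := fun u v w => hG.dist_triangle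
  have hdep : ∀ v, G.dist (e SpM.y) (e v) ≤ v.dep := by
    have ha : ∀ i, G.dist (e SpM.y) (e (SpM.a i)) ≤ 1 := fun i => hdist1 _ _ trivial
    have hb : ∀ i, G.dist (e SpM.y) (e (SpM.b i)) ≤ 2 := fun i =>
      (htri _ (e (SpM.a i)) _).trans (Nat.add_le_add (ha i) (hdist1 (.a i) (.b i) rfl))
    have hc : ∀ i h, G.dist (e SpM.y) (e (SpM.c i h)) ≤ 3 := fun i h =>
      (htri _ (e (SpM.b i)) _).trans (Nat.add_le_add (hb i) (hdist1 (.b i) (.c i h) rfl))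
    intro v
    rcases v with _ | _ | i | i | ⟨i, h⟩
    · exact hdist1 _ _ trivial
    · simp
    · exact ha i
    · exact hb i
    · exact hc i h
  have hdd : ∀ u v, G.dist (e u) (e v) ≤ u.dep + v.dep := fun u v => by
    refine (htri _ (e SpM.y) _).trans (Nat.add_le_add ?_ (hdep v))
    rw [SimpleGraph.dist_comm]
    exact hdep u
  have h4 : ∀ v, G.dist (e v) (e (SpM.f t i0 v)) ≤ 4 := by
    intro v
    rcases SpM.f_dep t i0 v with h | h
    · exact (hdd _ _).trans h
    · exact (hdist1 _ _ h).trans (by omega)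
  let σ : Equiv.Perm V := (e.symm.trans s).trans e
  have hσ : ∀ v, σ (e v) = e (SpM.f t i0 v) := by intro v; simp [σ, hs]
  refine ⟨σ, ?_, ?_, ?_, ?_, ?_, ?_, ?_⟩
  · intro v
    obtain ⟨v, rfl⟩ := e.surjective v
    rw [hσ]
    exact fun h => SpM.f_ne t i0 ht hfix v (e.injective h)
  · intro u v
    obtain ⟨v, rfl⟩ := e.surjective v
    obtain ⟨u, rfl⟩ := e.surjective u
    rw [hσ, hσ, he, he]
    exact SpM.f_adj t i0 ht hfix u v
  · intro u v _
    obtain ⟨v, rfl⟩ := e.surjective v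
    obtain ⟨u, rfl⟩ := e.surjective u
    rw [hσ, hσ]
    exact (hdd _ _).trans (Nat.add_le_add (SpM.dep_le _) (SpM.dep_le _))
  · rw [hσ]
    exact (hdd _ _).trans (by simp [SpM.f, SpM.dep])
  · intro z hz
    obtain ⟨z, rfl⟩ := e.surjective z
    rw [he] at hz
    rw [hσ]
    rcases z with _ | _ | i | i | ⟨i, h⟩ <;> simp only [SpM.adj] at hz
    exact (hdd _ _).trans (by simp [SpM.f, SpM.dep])
  · intro z _
    obtain ⟨z, rfl⟩ := e.surjective z
    rw [hσ]
    exact h4 z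
  · intro v
    obtain ⟨v, rfl⟩ := e.surjective v
    obtain ⟨n, hn, hn5, hv⟩ := SpM.f_cyc (Q := Q) t i0 ht hfix v
    have hit : ∀ k, (σ ^ k) (e v) = e ((SpM.f t i0)^[k] v) := by
      intro k
      induction k with
      | zero => simp
      | succ k ih => rw [pow_succ', Equiv.Perm.mul_apply, ih, hσ, Function.iterate_succ_apply']
    have hfx : (σ ^ n) (e v) = e v := by rw [hit, hv]
    have hsub : (σ.cycleOf (e v)).support ⊆ (Finset.range n).image (fun k => (σ ^ k) (e v)) := by
      intro w hw
      rw [Equiv.Perm.mem_support_cycleOf_iff] at hw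
      obtain ⟨k, hk⟩ := hw.1.exists_nat_pow_eq
      rw [Finset.mem_image]
      refine ⟨k % n, Finset.mem_range.mpr (Nat.mod_lt _ hn), ?_⟩
      rw [← hk]
      conv_rhs => rw [← Nat.mod_add_div k n, pow_add, Equiv.Perm.mul_apply, pow_mul]
      congr 1
      exact (Equiv.Perm.pow_apply_eq_self_of_apply_eq_self hfx _).symm
    calc _ ≤ _ := Finset.card_le_card hsub
      _ ≤ _ := Finset.card_image_le
      _ = n := Finset.card_range n
      _ ≤ 5 := hn5

/-- shape of a branch -/
theorem branch_shape {V : Type*} (G : SimpleGraph V) (y z : V)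
    (h : IsNeighborFTreeNotP1 G y z) :
    ∃ b c : V, ∃ q : Prop, G.Adj z b ∧ (q → G.Adj b c ∧ ¬ G.Adj z c ∧ z ≠ c) ∧
      ∀ v, v ∈ branch G y z ↔ v = z ∨ v = b ∨ (q ∧ v = c) := by
  have main : ∀ (n : ℕ) (φ : (G.induce (branch G y z)) ≃g pathGraph n),
      ∃ g : Fin n → V, Function.Injective g ∧ (∀ v, v ∈ branch G y z ↔ ∃ i, v = g i) ∧
        (∀ i j, G.Adj (g i) (g j) ↔ (pathGraph n).Adj i j) ∧
        g (φ ⟨z, Reachable.refl z⟩) = z := by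
    intro n φ
    refine ⟨fun i => (φ.symm i : V), ?_, ?_, ?_, by simp⟩
    · intro i j hij
      exact φ.symm.injective (Subtype.ext hij)
    · intro v
      constructor
      · intro hv
        exact ⟨φ ⟨v, hv⟩, by simp⟩
      · rintro ⟨i, rfl⟩
        exact (φ.symm i).2
    · intro i j
      rw [← φ.symm.map_adj_iff]
      rfl
  rcases h with ⟨⟨φ⟩⟩ | ⟨φ, h⟩
  · obtain ⟨g, ginj, gmem, gadj, gz⟩ := main 2 φ
    generalize φ ⟨z, Reachable.refl z⟩ = i at gz
    refine ⟨g (1 - i), z, False, ?_, by simp, ?_⟩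
    · rw [← gz, gadj, pathGraph_adj]
      clear gz
      revert i; decide
    · intro v
      rw [gmem, Fin.exists_fin_two, ← gz]
      fin_cases i <;> simp [or_comm]
  · obtain ⟨g, ginj, gmem, gadj, gz⟩ := main 3 φ
    generalize φ ⟨z, Reachable.refl z⟩ = i at gz h
    refine ⟨g 1, g (2 - i), True, ?_, fun _ => ⟨?_, ?_, ?_⟩, ?_⟩
    · rw [← gz, gadj, pathGraph_adj]
      rcases h with rfl | rfl <;> decide
    · rw [gadj, pathGraph_adj]
      rcases h with rfl | rfl <;> decide
    · rw [← gz, gadj, pathGraph_adj]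
      rcases h with rfl | rfl <;> decide
    · rw [← gz]
      intro hh
      have := ginj hh
      rcases h with rfl | rfl <;> revert this <;> decide
    · intro v
      rw [gmem, ← gz]
      rcases h with rfl | rfl <;> simp [Fin.exists_fin_succ] <;> tauto

theorem stmt18 {V : Type*} [Fintype V] [DecidableEq V] (G : SimpleGraph V)
    [DecidableRel G.Adj] (hG : G.IsTree) (x y : V) (hxy : G.Adj x y)
    (hx : ∃! w, G.Adj x w) (hy : 3 ≤ G.degree y)
    (hF : ∀ z, G.Adj y z → z ≠ x → IsNeighborFTreeNotP1 G y z) :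
    ∃ σ : Equiv.Perm V,
      (∀ v, σ v ≠ v) ∧
      (∀ u v, G.Adj u v → ¬ G.Adj (σ u) (σ v)) ∧
      (∀ u v, G.Adj u v → G.dist (σ u) (σ v) ≤ 6) ∧
      G.dist x (σ x) ≤ 2 ∧
      (∀ z, G.Adj x z → G.dist z (σ z) ≤ 3) ∧
      (∀ z, (∃! w, G.Adj z w) → G.dist z (σ z) ≤ 4) ∧
      (∀ v, (σ.cycleOf v).support.card ≤ 5) := by
  have hx' : ∀ w, G.Adj x w → w = y := fun w hw => hx.unique hw hxy
  let I := {z : V // G.Adj y z ∧ z ≠ x}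
  have hself : ∀ z, z ∈ branch G y z := fun z => Reachable.refl z
  have hy_nmem : ∀ z, G.Adj y z → y ∉ branch G y z := by
    intro z hz hmem
    have hb := (isAcyclic_iff_forall_adj_isBridge.mp hG.2) hz
    rw [isBridge_iff] at hb
    exact hb (Reachable.symm hmem)
  have hclosed : ∀ z u w, u ∈ branch G y z → G.Adj u w → w ∈ branch G y z ∨ (u = z ∧ w = y) ∨
      (u = y ∧ w = z) := by
    intro z u w hu huw
    by_cases h : s(u, w) = s(y, z)
    · right
      rw [Sym2.eq_iff] at h
      tauto
    · left
      refine Reachable.trans (show (G.deleteEdges {s(y, z)}).Reachable z u from hu) (Adj.reachable ?_)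
      rw [deleteEdges_adj]
      exact ⟨huw, h⟩
  have hcl : ∀ z u w, G.Adj y z → u ∈ branch G y z → G.Adj u w →
      w ∈ branch G y z ∨ (u = z ∧ w = y) := by
    intro z u w hz hu huw
    rcases hclosed z u w hu huw with h | h | h
    · exact Or.inl h
    · exact Or.inr h
    · exact absurd (h.1 ▸ hu) (hy_nmem z hz)
  have hx_nmem : ∀ z, G.Adj y z → z ≠ x → x ∉ branch G y z := by
    intro z hz hzx hmem
    rcases hcl z x y hz hmem hxy with h | h
    · exact hy_nmem z hz h
    · exact hzx h.1.symm
  have hdisj : ∀ z z' v, G.Adj y z → G.Adj y z' → z ≠ z' → v ∈ branch G y z →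
      v ∉ branch G y z' := by
    intro z z' v hz hz' hne hv
    have hz0 : z ∉ branch G y z' := by
      intro hm
      rcases hcl z' z y hz' hm hz.symm with h | h
      · exact hy_nmem z' hz' h
      · exact hne h.1
    obtain ⟨p⟩ : (G.deleteEdges {s(y, z)}).Reachable v z := Reachable.symm hv
    have hwalk : ∀ v u, (G.deleteEdges {s(y, z)}).Walk v u → v ∈ branch G y z →
        v ∈ branch G y z' → u ∈ branch G y z' := by
      intro v u p
      induction p with
      | nil => exact fun _ h => h
      | @cons a b c hab p ih =>
        intro h1 h2
        have hab' : G.Adj a b := (deleteEdges_adj.mp hab).1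
        have hb : b ∈ branch G y z :=
          Reachable.trans (show (G.deleteEdges {s(y, z)}).Reachable z a from h1) hab.reachable
        apply ih hb
        rcases hcl z' a b hz' h2 hab' with h | h
        · exact h
        · exact absurd (h.2 ▸ hb) (hy_nmem z hz)
    exact fun hv' => hz0 (hwalk v z p hv hv')
  have hcover : ∀ v, v = x ∨ v = y ∨ ∃ z : I, v ∈ branch G y z.1 := by
    intro v
    obtain ⟨p⟩ := hG.1.preconnected y v
    have hwalk : ∀ u v, G.Walk u v → (u = x ∨ u = y ∨ ∃ z : I, u ∈ branch G y z.1) →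
        (v = x ∨ v = y ∨ ∃ z : I, v ∈ branch G y z.1) := by
      intro u v p
      induction p with
      | nil => exact id
      | @cons a b c hab p ih =>
        intro h
        apply ih
        rcases h with rfl | rfl | ⟨z, hz⟩
        · exact Or.inr (Or.inl (hx' _ hab))
        · by_cases hbx : b = x
          · exact Or.inl hbx
          · exact Or.inr (Or.inr ⟨⟨b, hab, hbx⟩, hself b⟩)
        · rcases hcl z.1 a b z.2.1 hz hab with h | h
          · exact Or.inr (Or.inr ⟨z, h⟩)
          · exact Or.inr (Or.inl h.2)
    exact hwalk y v p (Or.inr (Or.inl rfl))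
  choose B C Q hzB hQ hmem using fun z : I => branch_shape G y z.1 (hF z.1 z.2.1 z.2.2)
  have hI : Nonempty I := by
    rw [← card_neighborFinset_eq_degree] at hy
    obtain ⟨z, hz, hzx⟩ := Finset.exists_mem_ne (by omega : 1 < (G.neighborFinset y).card) x
    exact ⟨⟨z, (mem_neighborFinset _ _ _).mp hz, hzx⟩⟩
  have hyx : y ≠ x := hxy.ne'
  have mB : ∀ z : I, B z ∈ branch G y z.1 := fun z => (hmem z _).2 (by simp)
  have mC : ∀ z : I, Q z → C z ∈ branch G y z.1 := fun z h => (hmem z _).2 (by simp [h])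
  let e0 : SpM I Q → V := fun m => match m with
    | .x => x
    | .y => y
    | .a i => i.1
    | .b i => B i
    | .c i _ => C i
  -- the leg of a vertex is determined
  have hleg : ∀ (i j : I) v, v ∈ branch G y i.1 → v ∈ branch G y j.1 → i = j := by
    intro i j v hi hj
    by_contra hne
    exact hdisj i.1 j.1 v i.2.1 j.2.1 (fun h => hne (Subtype.ext h)) hi hj
  have nx : ∀ (i : I) v, v ∈ branch G y i.1 → v ≠ x := by
    rintro i v hv rfl
    exact hx_nmem i.1 i.2.1 i.2.2 hv
  have ny : ∀ (i : I) v, v ∈ branch G y i.1 → v ≠ y := by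
    rintro i v hv rfl
    exact hy_nmem i.1 i.2.1 hv
  have nxadj : ∀ (i : I) v, v ∈ branch G y i.1 → ¬ G.Adj x v := fun i v hv h =>
    ny i v hv (hx' v h)
  have nyadj : ∀ (i : I) v, v ∈ branch G y i.1 → G.Adj y v → v = i.1 := by
    intro i v hv h
    rcases hcl i.1 v y i.2.1 hv h.symm with h | h
    · exact absurd h (hy_nmem i.1 i.2.1)
    · exact h.1
  have hlegadj : ∀ (i j : I) u v, u ∈ branch G y i.1 → v ∈ branch G y j.1 → G.Adj u v → i = j := by
    intro i j u v hu hv huv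
    rcases hcl i.1 u v i.2.1 hu huv with h | h
    · exact hleg i j v h hv
    · exact absurd h.2 (ny j v hv)
  have hinj : Function.Injective e0 := by
    have key : ∀ u v : SpM I Q, e0 u = e0 v → u.dep ≤ v.dep → u = v := by
      intro u v huv hd
      rcases u with _ | _ | i | i | ⟨i, h⟩ <;> rcases v with _ | _ | j | j | ⟨j, h'⟩ <;>
        simp only [SpM.dep] at hd <;> (try omega) <;> simp only [e0] at huv
      · rfl
      · exact absurd huv.symm (nx j _ (hself _))
      · exact absurd huv.symm (nx j _ (mB _))
      · exact absurd huv.symm (nx j _ (mC _ h'))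
      · exact absurd huv hyx
      · rfl
      · exact absurd huv.symm (ny j _ (hself _))
      · exact absurd huv.symm (ny j _ (mB _))
      · exact absurd huv.symm (ny j _ (mC _ h'))
      · exact absurd huv (nx i _ (hself _))
      · rw [Subtype.ext huv]
      · have := hleg i j _ (hself _) (huv ▸ mB j)
        subst this
        exact absurd huv (hzB i).ne
      · have := hleg i j _ (hself _) (huv ▸ mC j h')
        subst this
        exact absurd huv (hQ i h').2.2
      · rw [hleg i j _ (mB _) (huv ▸ mB j)]
      · have := hleg i j _ (mB _) (huv ▸ mC j h')
        subst this
        exact absurd huv (hQ i h').1.ne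
      · have := hleg i j _ (mC _ h) (huv ▸ mC j h')
        subst this
        rfl
    intro u v huv
    rcases le_total u.dep v.dep with h | h
    · exact key u v huv h
    · exact (key v u huv.symm h).symm
  have hsurj : Function.Surjective e0 := by
    intro v
    rcases hcover v with rfl | rfl | ⟨z, hz⟩
    · exact ⟨.x, rfl⟩
    · exact ⟨.y, rfl⟩
    · rcases (hmem z v).1 hz with rfl | rfl | ⟨hq, rfl⟩
      · exact ⟨.a z, rfl⟩
      · exact ⟨.b z, rfl⟩
      · exact ⟨.c z hq, rfl⟩
  have hadj : ∀ u v, G.Adj (e0 u) (e0 v) ↔ SpM.adj u v := by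
    have key : ∀ u v : SpM I Q, u.dep ≤ v.dep → (G.Adj (e0 u) (e0 v) ↔ SpM.adj u v) := by
      intro u v hd
      rcases u with _ | _ | i | i | ⟨i, h⟩ <;> rcases v with _ | _ | j | j | ⟨j, h'⟩ <;>
        simp only [SpM.dep] at hd <;> (try omega) <;> simp only [e0, SpM.adj, iff_true, iff_false]
      · exact G.irrefl
      · exact nxadj j _ (hself _)
      · exact nxadj j _ (mB _)
      · exact nxadj j _ (mC _ h')
      · exact hxy.symm
      · exact G.irrefl
      · exact j.2.1
      · exact fun h => (hzB j).ne (nyadj j _ (mB j) h).symm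
      · exact fun h => (hQ j h').2.2 (nyadj j _ (mC j h') h).symm
      · exact fun h => nxadj i _ (hself _) h.symm
      · intro h
        have := hlegadj i j _ _ (hself _) (hself _) h
        subst this
        exact G.irrefl h
      · constructor
        · exact hlegadj i j _ _ (hself _) (mB _)
        · rintro rfl
          exact hzB i
      · intro h
        have := hlegadj i j _ _ (hself _) (mC _ h') h
        subst this
        exact (hQ i h').2.1 h
      · intro h
        have := hlegadj i j _ _ (mB _) (mB _) h
        subst this
        exact G.irrefl h
      · constructor
        · exact hlegadj i j _ _ (mB _) (mC _ h')
        · rintro rfl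
          exact (hQ i h').1
      · intro hh
        have := hlegadj i j _ _ (mC _ h) (mC _ h') hh
        subst this
        exact G.irrefl hh
    intro u v
    rcases le_total u.dep v.dep with h | h
    · exact key u v h
    · rw [G.adj_comm, key v u h]
      rcases u with _ | _ | i | i | ⟨i, h⟩ <;> rcases v with _ | _ | j | j | ⟨j, h'⟩ <;>
        simp only [SpM.adj] <;> exact eq_comm
  exact core G hG.1 Q (Equiv.ofBijective e0 ⟨hinj, hsurj⟩) hadj
end
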